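/- Let n ≥ 2, let Ω, Ω̃ ⊆ ℝⁿ be bounded, uniformly convex open domains with smooth boundary, with the closure of Ω̃ contained in the open unit ball B₁(0). Then there exists a constant C₃₆ > 0, depending only on Ω and Ω̃, such that for every strictly convex solution (u, c) of the second boundary value problem for the Lorentz mean curvature operator on (Ω, Ω̃), the Legendre transform ũ of u satisfies max over the closure of Ω̃ of ‖D²ũ(y)‖ ≤ C₃₆, where ‖·‖ is the operator norm. -/

import Mathlib

noncomputable section
open MeasureTheory
open scoped RealInnerProductSpace

/-- The `i`-th standard basis vector of `ℝⁿ`. -/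
def ev (n : ℕ) (i : Fin n) : EuclideanSpace ℝ (Fin n) := EuclideanSpace.single i 1

/-- Lorentz mean curvature operator `M[u] x = ∑ i, ∂ᵢ (∂ᵢ u / √(1 - |∇u|²)) x`. -/
def MOp (n : ℕ) (u : EuclideanSpace ℝ (Fin n) → ℝ) (x : EuclideanSpace ℝ (Fin n)) : ℝ :=
  ∑ i : Fin n,
    fderiv ℝ (fun y => fderiv ℝ u y (ev n i) / Real.sqrt (1 - ‖gradient u y‖ ^ 2)) x (ev n i)

/-- Euclidean mean curvature operator `E[u] x = ∑ i, ∂ᵢ (∂ᵢ u / √(1 + |∇u|²)) x`. -/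
def EOp (n : ℕ) (u : EuclideanSpace ℝ (Fin n) → ℝ) (x : EuclideanSpace ℝ (Fin n)) : ℝ :=
  ∑ i : Fin n,
    fderiv ℝ (fun y => fderiv ℝ u y (ev n i) / Real.sqrt (1 + ‖gradient u y‖ ^ 2)) x (ev n i)

/-- `Ω` is a uniformly convex domain with smooth boundary, exhibited by the defining
function `h` with uniform concavity constant `θ`:  `h` is smooth, `Ω = {h > 0}`,
`|∇h| = 1` on `∂Ω`, and `⟨ξ, D²h(p) ξ⟩ ≤ -θ |ξ|²` for all `p, ξ`. -/
def IsUnifConvexDefFn (n : ℕ) (Ω : Set (EuclideanSpace ℝ (Fin n)))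
    (h : EuclideanSpace ℝ (Fin n) → ℝ) (θ : ℝ) : Prop :=
  ContDiff ℝ (⊤ : ℕ∞) h ∧ Ω = {p | 0 < h p} ∧
  (∀ p ∈ frontier Ω, ‖gradient h p‖ = 1) ∧ 0 < θ ∧
  ∀ p ξ : EuclideanSpace ℝ (Fin n), ⟪ξ, fderiv ℝ (gradient h) p ξ⟫ ≤ -θ * ‖ξ‖ ^ 2

/-- `u` is smooth on the closure of `Ω` (i.e. on an open neighbourhood of it). -/
def SmoothOnClosure (n : ℕ) (Ω : Set (EuclideanSpace ℝ (Fin n)))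
    (u : EuclideanSpace ℝ (Fin n) → ℝ) : Prop :=
  ∃ U : Set (EuclideanSpace ℝ (Fin n)), IsOpen U ∧ closure Ω ⊆ U ∧ ContDiffOn ℝ (⊤ : ℕ∞) u U

/-- `(u, c)` is a strictly convex solution of the second boundary value problem for the
Lorentz mean curvature operator on `(Ω, Ω')`: `u` is smooth up to the boundary, spacelike
(`|∇u| < 1`), has positive definite Hessian `D²u` on the closure of `Ω`, its gradient map
is a bijection from `Ω` onto `Ω'`, and `M[u] = c` on `Ω`. -/
def IsSol (n : ℕ) (Ω Ω' : Set (EuclideanSpace ℝ (Fin n)))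
    (u : EuclideanSpace ℝ (Fin n) → ℝ) (c : ℝ) : Prop :=
  SmoothOnClosure n Ω u ∧
  (∀ x ∈ closure Ω, ‖gradient u x‖ < 1) ∧
  (∀ x ∈ closure Ω, ∀ ξ : EuclideanSpace ℝ (Fin n), ξ ≠ 0 →
      0 < ⟪ξ, fderiv ℝ (gradient u) x ξ⟫) ∧
  Set.BijOn (gradient u) Ω Ω' ∧
  (∀ x ∈ Ω, MOp n u x = c)

/-- `(u, c)` is a strictly convex solution of the second boundary value problem for the
Euclidean mean curvature operator on `(Ω, Ω')`. -/
def IsSolE (n : ℕ) (Ω Ω' : Set (EuclideanSpace ℝ (Fin n)))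
    (u : EuclideanSpace ℝ (Fin n) → ℝ) (c : ℝ) : Prop :=
  SmoothOnClosure n Ω u ∧
  (∀ x ∈ closure Ω, ∀ ξ : EuclideanSpace ℝ (Fin n), ξ ≠ 0 →
      0 < ⟪ξ, fderiv ℝ (gradient u) x ξ⟫) ∧
  Set.BijOn (gradient u) Ω Ω' ∧
  (∀ x ∈ Ω, EOp n u x = c)

/-- `ut` is the Legendre transform of `u`: it is smooth up to the boundary of `Ω'`,
satisfies `ut (∇u x) = ⟨x, ∇u x⟩ - u x` and `∇ut (∇u x) = x` for `x ∈ Ω`. -/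
def IsLegendre (n : ℕ) (Ω Ω' : Set (EuclideanSpace ℝ (Fin n)))
    (u ut : EuclideanSpace ℝ (Fin n) → ℝ) : Prop :=
  SmoothOnClosure n Ω' ut ∧
  (∀ x ∈ Ω, ut (gradient u x) = ⟪x, gradient u x⟫ - u x) ∧
  (∀ x ∈ Ω, gradient ut (gradient u x) = x)

/-- The coefficient matrix `s_ij(p) = (δ_ij + pᵢpⱼ/(1 - |p|²)) / √(1 - |p|²)` of the
Lorentz mean curvature operator written in nondivergence form. -/
def sMat (n : ℕ) (p : EuclideanSpace ℝ (Fin n)) (i j : Fin n) : ℝ :=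
  ((if i = j then (1 : ℝ) else 0) + p i * p j / (1 - ‖p‖ ^ 2)) / Real.sqrt (1 - ‖p‖ ^ 2)

/-- `Ω` has smooth boundary: it is the superlevel set of a smooth function whose
gradient does not vanish on the boundary. -/
def HasSmoothBoundary (n : ℕ) (Ω : Set (EuclideanSpace ℝ (Fin n))) : Prop :=
  ∃ g : EuclideanSpace ℝ (Fin n) → ℝ, ContDiff ℝ (⊤ : ℕ∞) g ∧ Ω = {p | 0 < g p} ∧
    ∀ p ∈ frontier Ω, gradient g p ≠ 0

/-- `B(p) = Iₙ + p pᵀ / (v (1 + v))`, `v = √(1 - |p|²)`: the positive square root of the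
inverse induced metric of a spacelike graph with gradient `p`. -/
def sqB (n : ℕ) (p : EuclideanSpace ℝ (Fin n)) : Matrix (Fin n) (Fin n) ℝ :=
  1 + (Real.sqrt (1 - ‖p‖ ^ 2) * (1 + Real.sqrt (1 - ‖p‖ ^ 2)))⁻¹ •
      Matrix.of fun i j => p i * p j

/-- `B'(p) = Iₙ - p pᵀ / (1 + v)`, `v = √(1 - |p|²)`: the square root of the induced
metric of a spacelike graph with gradient `p`. -/
def sqBinv (n : ℕ) (p : EuclideanSpace ℝ (Fin n)) : Matrix (Fin n) (Fin n) ℝ :=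
  1 - (1 + Real.sqrt (1 - ‖p‖ ^ 2))⁻¹ • Matrix.of fun i j => p i * p j


section core
open Filter Topology Set
open scoped ContDiff

variable {E : Type*} [NormedAddCommGroup E] [InnerProductSpace ℝ E]
variable {V : Type*} [NormedAddCommGroup V] [NormedSpace ℝ V]

/-- second derivative of `f` at `y` along the line in direction `a` is `q`. -/
def HasSnd (f : E → ℝ) (y a : E) (q : ℝ) : Prop :=
  ∃ f' : ℝ → ℝ, (∀ᶠ t in 𝓝 (0:ℝ), HasDerivAt (fun t : ℝ => f (y + t • a)) (f' t) t) ∧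
    HasDerivAt f' q 0

lemma HasSnd.add {f k : E → ℝ} {y a : E} {p q : ℝ} (hf : HasSnd f y a p) (hk : HasSnd k y a q) :
    HasSnd (fun x => f x + k x) y a (p + q) := by
  obtain ⟨f', h1, h2⟩ := hf
  obtain ⟨k', h3, h4⟩ := hk
  refine ⟨fun t => f' t + k' t, ?_, h2.add h4⟩
  filter_upwards [h1, h3] with t ht ht'
  exact ht.add ht'

lemma HasSnd.const_mul {f : E → ℝ} {y a : E} {p : ℝ} (c : ℝ) (hf : HasSnd f y a p) :
    HasSnd (fun x => c * f x) y a (c * p) := by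
  obtain ⟨f', h1, h2⟩ := hf
  refine ⟨fun t => c * f' t, ?_, h2.const_mul c⟩
  filter_upwards [h1] with t ht
  exact ht.const_mul c

lemma second_test {q q' : ℝ → ℝ} {q2 : ℝ} (h1 : ∀ᶠ t in 𝓝 (0:ℝ), HasDerivAt q (q' t) t)
    (h2 : HasDerivAt q' q2 0) (h0 : q' 0 = 0) (hq : 0 < q2) :
    ∀ᶠ t in 𝓝 (0:ℝ), t ≠ 0 → q 0 < q t := by
  have hd : deriv (fun t => q t - q2 / 4 * t ^ 2) =ᶠ[𝓝 0] fun t => q' t - q2 / 2 * t := by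
    filter_upwards [h1] with t ht
    have := ht.sub ((hasDerivAt_pow 2 t).const_mul (q2 / 4))
    rw [show q' t - q2 / 2 * t = q' t - q2 / 4 * ((2:ℕ) * t ^ (2 - 1)) by push_cast; ring]
    exact this.deriv
  have hdd : HasDerivAt (fun t => q' t - q2 / 2 * t) (q2 - q2 / 2) 0 := by
    have := h2.fun_sub ((hasDerivAt_id' (0:ℝ)).const_mul (q2 / 2))
    rwa [mul_one] at this
  have hdd' : deriv (deriv (fun t => q t - q2 / 4 * t ^ 2)) 0 = q2 - q2 / 2 := by
    rw [hd.deriv_eq]; exact hdd.deriv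
  have hm : IsLocalMin (fun t => q t - q2 / 4 * t ^ 2) 0 := by
    apply isLocalMin_of_deriv_deriv_pos
    · rw [hdd']; linarith
    · rw [hd.eq_of_nhds]; simp [h0]
    · exact (h1.self_of_nhds.continuousAt).sub (by fun_prop)
  filter_upwards [hm] with t ht h
  have : 0 < q2 / 4 * t ^ 2 := by positivity
  simp at ht
  linarith

lemma HasSnd.nonpos_of_isLocalMax {f : E → ℝ} {y a : E} {q : ℝ} (hf : HasSnd f y a q)
    (hm : IsLocalMax f y) : q ≤ 0 := by
  obtain ⟨f', h1, h2⟩ := hf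
  by_contra hq
  push Not at hq
  have hc : Tendsto (fun t : ℝ => y + t • a) (𝓝 0) (𝓝 y) := by
    have : ContinuousAt (fun t : ℝ => y + t • a) 0 := by fun_prop
    simpa [ContinuousAt] using this
  have hm' : ∀ᶠ t in 𝓝 (0:ℝ), f (y + t • a) ≤ f y := hc.eventually hm
  have h0 : f' 0 = 0 := by
    refine IsLocalMax.hasDerivAt_eq_zero (f := fun t : ℝ => f (y + t • a)) ?_ h1.self_of_nhds
    filter_upwards [hm'] with t ht
    simpa using ht
  have h3 := second_test h1 h2 h0 hq
  have h4 : ∀ᶠ t in 𝓝[≠] (0:ℝ), False := by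
    filter_upwards [h3.filter_mono nhdsWithin_le_nhds, hm'.filter_mono nhdsWithin_le_nhds,
      self_mem_nhdsWithin] with t ht1 ht2 ht3
    have := ht1 ht3
    simp at this
    linarith
  obtain ⟨t, ht⟩ := h4.exists
  exact ht

lemma line_tendsto (y a : E) : Tendsto (fun t : ℝ => y + t • a) (𝓝 0) (𝓝 y) := by
  have : ContinuousAt (fun t : ℝ => y + t • a) 0 := by fun_prop
  simpa [ContinuousAt] using this

lemma line_hasDerivAt (y a : E) (t : ℝ) : HasDerivAt (fun t : ℝ => y + t • a) a t := by
  simpa using ((hasDerivAt_id t).smul_const a).const_add y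

lemma line_deriv {U : Set E} (hU : IsOpen U) {F : E → V} (hF : ContDiffOn ℝ ∞ F U) {y : E}
    (hy : y ∈ U) (a : E) :
    ∀ᶠ t in 𝓝 (0:ℝ), HasDerivAt (fun t : ℝ => F (y + t • a)) (fderiv ℝ F (y + t • a) a) t := by
  filter_upwards [(line_tendsto y a).eventually (hU.mem_nhds hy)] with t ht
  have h1 : DifferentiableAt ℝ F (y + t • a) :=
    (hF.contDiffAt (hU.mem_nhds ht)).differentiableAt (by simp)
  exact h1.hasFDerivAt.comp_hasDerivAt t (line_hasDerivAt y a t)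

lemma line_deriv0 {U : Set E} (hU : IsOpen U) {F : E → V} (hF : ContDiffOn ℝ ∞ F U) {y : E}
    (hy : y ∈ U) (a : E) :
    HasDerivAt (fun t : ℝ => F (y + t • a)) (fderiv ℝ F y a) 0 := by
  simpa using (line_deriv hU hF hy a).self_of_nhds

lemma sm_fderiv {U : Set E} (hU : IsOpen U) {F : E → V} (hF : ContDiffOn ℝ ∞ F U) :
    ContDiffOn ℝ ∞ (fderiv ℝ F) U :=
  hF.fderiv_of_isOpen hU (by simp)

/-- second derivative of a smooth real function along a line -/
lemma hasSnd_of_smooth {U : Set E} (hU : IsOpen U) {F : E → ℝ} (hF : ContDiffOn ℝ ∞ F U) {y : E}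
    (hy : y ∈ U) (a : E) : HasSnd F y a (fderiv ℝ (fderiv ℝ F) y a a) := by
  refine ⟨_, line_deriv hU hF hy a, ?_⟩
  exact (line_deriv0 hU (sm_fderiv hU hF) hy a).clm_apply (hasDerivAt_const 0 a) |>.congr_deriv
    (by simp)

lemma symm2 {U : Set E} (hU : IsOpen U) {F : E → V} (hF : ContDiffOn ℝ ∞ F U) {y : E}
    (hy : y ∈ U) (a b : E) : fderiv ℝ (fderiv ℝ F) y a b = fderiv ℝ (fderiv ℝ F) y b a := by
  have h := (hF.contDiffAt (hU.mem_nhds hy)).isSymmSndFDerivAt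
    (by rw [minSmoothness_of_isRCLikeNormedField]; exact WithTop.coe_le_coe.2 (le_top : (2:ℕ∞) ≤ ⊤))
  exact h a b

/-- differentiating an identity on an open set along a line -/
lemma line_deriv_unique {U : Set E} (hU : IsOpen U) {y : E} (hy : y ∈ U) (a : E)
    {F G : E → V} {F' G' : V} (hFG : ∀ x ∈ U, F x = G x)
    (h1 : HasDerivAt (fun t : ℝ => F (y + t • a)) F' 0)
    (h2 : HasDerivAt (fun t : ℝ => G (y + t • a)) G' 0) : F' = G' := by
  refine h1.unique (h2.congr_of_eventuallyEq ?_)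
  filter_upwards [(line_tendsto y a).eventually (hU.mem_nhds hy)] with t ht
  exact hFG _ ht

/-- Legendre-dual solution data. -/
structure Sol {ι : Type*} [Fintype ι] (D Ω : Set E) (r : ι → E → E) (Cw δ : ℝ) (U : Set E)
    (X : E → E) (w : ι → E → E) : Prop where
  hU : IsOpen U
  hDU : closure D ⊆ U
  hX : ContDiffOn ℝ ∞ X U
  sym : ∀ y ∈ U, ∀ a b, ⟪fderiv ℝ X y a, b⟫ = ⟪a, fderiv ℝ X y b⟫
  pos : ∀ y ∈ closure D, ∀ a, a ≠ 0 → 0 < ⟪a, fderiv ℝ X y a⟫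
  hw : ∀ i, ContDiffOn ℝ ∞ (w i) D
  Aw : ∀ y ∈ D, ∀ i, fderiv ℝ X y (w i y) = r i y
  eqn : ∃ c : ℝ, ∀ y ∈ D, ∑ i, ⟪r i y, w i y⟫ = c
  wb : ∀ y ∈ D, ∀ i, ‖w i y‖ ≤ Cw
  wl : ∀ y ∈ D, δ ≤ ∑ i, ‖w i y‖ ^ 2
  XΩ : ∀ y ∈ D, X y ∈ Ω
  Xf : ∀ y ∈ frontier D, X y ∈ frontier Ω

section sol
variable {ι : Type*} [Fintype ι] {D Ω : Set E} {r : ι → E → E} {Cw δ : ℝ} {U : Set E}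
  {X : E → E} {w : ι → E → E}

lemma Sol.sA (S : Sol D Ω r Cw δ U X w) : ContDiffOn ℝ ∞ (fderiv ℝ X) U := sm_fderiv S.hU S.hX
lemma Sol.sB (S : Sol D Ω r Cw δ U X w) : ContDiffOn ℝ ∞ (fderiv ℝ (fderiv ℝ X)) U :=
  sm_fderiv S.hU S.sA

lemma Sol.s2 (S : Sol D Ω r Cw δ U X w) {y : E} (hy : y ∈ U) (a b : E) :
    fderiv ℝ (fderiv ℝ X) y a b = fderiv ℝ (fderiv ℝ X) y b a := symm2 S.hU S.hX hy a b

lemma Sol.s3 (S : Sol D Ω r Cw δ U X w) {y : E} (hy : y ∈ U) (a b d : E) :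
    ⟪fderiv ℝ (fderiv ℝ X) y a b, d⟫ = ⟪b, fderiv ℝ (fderiv ℝ X) y a d⟫ := by
  have h := line_deriv0 S.hU S.sA hy a
  have h1 := (h.clm_apply (hasDerivAt_const 0 b)).inner ℝ (hasDerivAt_const (0:ℝ) d)
  have h2 := (hasDerivAt_const (0:ℝ) b).inner ℝ (h.clm_apply (hasDerivAt_const 0 d))
  have := line_deriv_unique (F := fun x => ⟪fderiv ℝ X x b, d⟫)
    (G := fun x => ⟪b, fderiv ℝ X x d⟫) S.hU hy a (fun x hx => S.sym x hx b d) h1 h2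
  simpa using this

lemma Sol.s4 (S : Sol D Ω r Cw δ U X w) {y : E} (hy : y ∈ U) (a b : E) :
    fderiv ℝ (fderiv ℝ (fderiv ℝ X)) y a b = fderiv ℝ (fderiv ℝ (fderiv ℝ X)) y b a :=
  symm2 S.hU S.sA hy a b

lemma Sol.s5 (S : Sol D Ω r Cw δ U X w) {y : E} (hy : y ∈ U) (a b d : E) :
    fderiv ℝ (fderiv ℝ (fderiv ℝ X)) y a b d = fderiv ℝ (fderiv ℝ (fderiv ℝ X)) y a d b := by
  have h := line_deriv0 S.hU S.sB hy a
  have h1 := (h.clm_apply (hasDerivAt_const 0 b)).clm_apply (hasDerivAt_const 0 d)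
  have h2 := (h.clm_apply (hasDerivAt_const 0 d)).clm_apply (hasDerivAt_const 0 b)
  have := line_deriv_unique (F := fun x => fderiv ℝ (fderiv ℝ X) x b d)
    (G := fun x => fderiv ℝ (fderiv ℝ X) x d b) S.hU hy a (fun x hx => S.s2 hx b d) h1 h2
  simpa using this

lemma Sol.s6 (S : Sol D Ω r Cw δ U X w) {y : E} (hy : y ∈ U) (a b d e : E) :
    ⟪fderiv ℝ (fderiv ℝ (fderiv ℝ X)) y a b d, e⟫ =
      ⟪d, fderiv ℝ (fderiv ℝ (fderiv ℝ X)) y a b e⟫ := by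
  have h := (line_deriv0 S.hU S.sB hy a).clm_apply (hasDerivAt_const 0 b)
  have h1 := (h.clm_apply (hasDerivAt_const 0 d)).inner ℝ (hasDerivAt_const (0:ℝ) e)
  have h2 := (hasDerivAt_const (0:ℝ) d).inner ℝ (h.clm_apply (hasDerivAt_const 0 e))
  have := line_deriv_unique (F := fun x => ⟪fderiv ℝ (fderiv ℝ X) x b d, e⟫)
    (G := fun x => ⟪d, fderiv ℝ (fderiv ℝ X) x b e⟫) S.hU hy a (fun x hx => S.s3 hx b d e) h1 h2
  simpa using this

lemma Sol.s7 (S : Sol D Ω r Cw δ U X w) {y : E} (hy : y ∈ U) (a b : E) :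
    ⟪a, fderiv ℝ (fderiv ℝ (fderiv ℝ X)) y b b a⟫ =
      ⟪b, fderiv ℝ (fderiv ℝ (fderiv ℝ X)) y a a b⟫ := by
  rw [S.s5 hy b b a, S.s4 hy b a, ← S.s6 hy, S.s5 hy, real_inner_comm]

lemma Sol.memU (S : Sol D Ω r Cw δ U X w) {y : E} (hy : y ∈ D) : y ∈ U :=
  S.hDU (subset_closure hy)

/-- first derivative of `A w = r` -/
lemma Sol.d0 (S : Sol D Ω r Cw δ U X w) (hD : IsOpen D) {R : Set E} (hR : IsOpen R) (hDR : D ⊆ R)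
    (hr : ∀ i, ContDiffOn ℝ ∞ (r i) R) {y : E} (hy : y ∈ D) (a : E) (i : ι) :
    fderiv ℝ (fderiv ℝ X) y a (w i y) + fderiv ℝ X y (fderiv ℝ (w i) y a)
      = fderiv ℝ (r i) y a := by
  have h1 := (line_deriv0 S.hU S.sA (S.memU hy) a).clm_apply (line_deriv0 hD (S.hw i) hy a)
  have h2 := line_deriv0 hR (hr i) (hDR hy) a
  have := line_deriv_unique (F := fun x => fderiv ℝ X x (w i x))
    (G := r i) hD hy a (fun x hx => S.Aw x hx i) h1 h2
  simpa using this

lemma Sol.d1 (S : Sol D Ω r Cw δ U X w) (hD : IsOpen D) {R : Set E} (hR : IsOpen R) (hDR : D ⊆ R)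
    (hr : ∀ i, ContDiffOn ℝ ∞ (r i) R) {y : E} (hy : y ∈ D) (a : E) :
    ∑ i, ⟪w i y, fderiv ℝ (fderiv ℝ X) y a (w i y)⟫ = ∑ i, 2 * ⟪fderiv ℝ (r i) y a, w i y⟫ := by
  obtain ⟨c, hc⟩ := S.eqn
  have h1 : HasDerivAt (fun t : ℝ => ∑ i, ⟪r i (y + t • a), w i (y + t • a)⟫) 
      (∑ i, (⟪r i y, fderiv ℝ (w i) y a⟫ + ⟪fderiv ℝ (r i) y a, w i y⟫)) 0 := by
    refine HasDerivAt.fun_sum fun i _ => ?_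
    have := (line_deriv0 hR (hr i) (hDR hy) a).inner ℝ (line_deriv0 hD (S.hw i) hy a)
    simpa using this
  have h2 := line_deriv_unique (F := fun x => ∑ i, ⟪r i x, w i x⟫) (G := fun _ => c) hD hy a hc
    h1 (hasDerivAt_const 0 c)
  have h3 : ∀ i, ⟪w i y, fderiv ℝ (fderiv ℝ X) y a (w i y)⟫ = 2 * ⟪fderiv ℝ (r i) y a, w i y⟫
     - (⟪r i y, fderiv ℝ (w i) y a⟫ + ⟪fderiv ℝ (r i) y a, w i y⟫) := by
    intro i
    have e := S.d0 hD hR hDR hr hy a i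
    rw [← S.Aw y hy i, S.sym y (S.memU hy), ← e, inner_add_left, 
      real_inner_comm (w i y) (fderiv ℝ X y _), real_inner_comm (w i y) (fderiv ℝ (fderiv ℝ X) y a _)]
    ring
  simp_rw [h3]
  rw [Finset.sum_sub_distrib, h2, sub_zero]

lemma Sol.d2 (S : Sol D Ω r Cw δ U X w) (hD : IsOpen D) {R : Set E} (hR : IsOpen R) (hDR : D ⊆ R)
    (hr : ∀ i, ContDiffOn ℝ ∞ (r i) R) {y : E} (hy : y ∈ D) (a : E) :
    ∑ i, ⟪w i y, fderiv ℝ (fderiv ℝ (fderiv ℝ X)) y a a (w i y)⟫ =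
    ∑ i, (2 * ⟪fderiv ℝ (fderiv ℝ (r i)) y a a, w i y⟫ +
      2 * ⟪fderiv ℝ (w i) y a, fderiv ℝ X y (fderiv ℝ (w i) y a)⟫) := by
  have h1 : HasDerivAt (fun t : ℝ => ∑ i, ⟪w i (y + t • a),
      fderiv ℝ (fderiv ℝ X) (y + t • a) a (w i (y + t • a))⟫) 
      (∑ i, (⟪w i y, fderiv ℝ (fderiv ℝ (fderiv ℝ X)) y a a (w i y) + 
        fderiv ℝ (fderiv ℝ X) y a (fderiv ℝ (w i) y a)⟫ + 
        ⟪fderiv ℝ (w i) y a, fderiv ℝ (fderiv ℝ X) y a (w i y)⟫)) 0 := by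
    refine HasDerivAt.fun_sum fun i _ => ?_
    have hb := line_deriv0 hD (S.hw i) hy a
    have := hb.inner ℝ (((line_deriv0 S.hU S.sB (S.memU hy) a).clm_apply
      (hasDerivAt_const 0 a)).clm_apply hb)
    simpa using this
  have h2 : HasDerivAt (fun t : ℝ => ∑ i, 2 * ⟪fderiv ℝ (r i) (y + t • a) a, w i (y + t • a)⟫) 
      (∑ i, 2 * (⟪fderiv ℝ (r i) y a, fderiv ℝ (w i) y a⟫ + 
        ⟪fderiv ℝ (fderiv ℝ (r i)) y a a, w i y⟫)) 0 := by
    refine HasDerivAt.fun_sum fun i _ => ?_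
    have hb := line_deriv0 hD (S.hw i) hy a
    have := ((line_deriv0 hR (sm_fderiv hR (hr i)) (hDR hy) a).clm_apply
      (hasDerivAt_const 0 a)).inner ℝ hb
    simpa using this.const_mul 2
  have h3 := line_deriv_unique (F := fun x => ∑ i, ⟪w i x, fderiv ℝ (fderiv ℝ X) x a (w i x)⟫)
    (G := fun x => ∑ i, 2 * ⟪fderiv ℝ (r i) x a, w i x⟫) hD hy a 
    (fun x hx => S.d1 hD hR hDR hr hx a) h1 h2
  rw [← sub_eq_zero] at h3 ⊢
  rw [← h3, ← Finset.sum_sub_distrib, ← Finset.sum_sub_distrib]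
  refine Finset.sum_congr rfl fun i _ => ?_
  have e := S.d0 hD hR hDR hr hy a i
  have e2 := S.s3 (S.memU hy) a (w i y) (fderiv ℝ (w i) y a)
  rw [← e, inner_add_right, inner_add_left, ← e2, 
    real_inner_comm (fderiv ℝ (w i) y a) (fderiv ℝ (fderiv ℝ X) y a (w i y)),
    real_inner_comm (fderiv ℝ (w i) y a) (fderiv ℝ X y _)]
  ring

end sol
end core

section core2
set_option linter.unusedSectionVars false
open Filter Topology Set
open scoped ContDiff

variable {E : Type*} [NormedAddCommGroup E] [InnerProductSpace ℝ E] [CompleteSpace E]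

lemma fderiv_eq_grad (f : E → ℝ) (y a : E) : fderiv ℝ f y a = ⟪gradient f y, a⟫ := by
  simp [gradient]

lemma grad_smooth {f : E → ℝ} {U : Set E} (hU : IsOpen U) (hf : ContDiffOn ℝ ∞ f U) :
    ContDiffOn ℝ ∞ (gradient f) U :=
  (InnerProductSpace.toDual ℝ E).symm.contDiff.comp_contDiffOn (sm_fderiv hU hf)

lemma fderiv2_eq_grad {f : E → ℝ} {U : Set E} (hU : IsOpen U) (hf : ContDiffOn ℝ ∞ f U) {y : E}
    (hy : y ∈ U) (a b : E) :
    fderiv ℝ (fderiv ℝ f) y a b = ⟪fderiv ℝ (gradient f) y a, b⟫ := by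
  have h1 := (line_deriv0 hU (sm_fderiv hU hf) hy a).clm_apply (hasDerivAt_const 0 b)
  have h2 := (line_deriv0 hU (grad_smooth hU hf) hy a).inner ℝ (hasDerivAt_const 0 b)
  have := line_deriv_unique (F := fun x => fderiv ℝ f x b) (G := fun x => ⟪gradient f x, b⟫)
    hU hy a (fun x _ => fderiv_eq_grad f x b) h1 h2
  simpa using this

/-- fixed geometric data -/
structure Geo {ι : Type*} [Fintype ι] (D Ω : Set E) (g h : E → ℝ) (θ₁ θ₂ : ℝ)
    (r : ι → E → E) (R : Set E) : Prop where
  hg : ContDiff ℝ ∞ g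
  gΩ : Ω = {p | 0 < g p}
  g1 : ∀ p ∈ frontier Ω, ‖gradient g p‖ = 1
  gθ : 0 < θ₁
  gc : ∀ p ξ : E, ⟪ξ, fderiv ℝ (gradient g) p ξ⟫ ≤ -θ₁ * ‖ξ‖ ^ 2
  hh : ContDiff ℝ ∞ h
  hD : D = {p | 0 < h p}
  h1 : ∀ p ∈ frontier D, ‖gradient h p‖ = 1
  hθ : 0 < θ₂
  hc : ∀ p ξ : E, ⟪ξ, fderiv ℝ (gradient h) p ξ⟫ ≤ -θ₂ * ‖ξ‖ ^ 2
  cD : IsCompact (closure D)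
  cΩ : IsCompact (closure Ω)
  hR : IsOpen R
  hDR : closure D ⊆ R
  hr : ∀ i, ContDiffOn ℝ ∞ (r i) R

section geo
variable {ι : Type*} [Fintype ι] {D Ω : Set E} {r : ι → E → E} {Cw δ : ℝ} {U R : Set E}
  {X : E → E} {w : ι → E → E} {g h : E → ℝ} {θ₁ θ₂ : ℝ}

lemma zero_on_frontier {f : E → ℝ} (hf : Continuous f) {D : Set E} (hD : D = {p | 0 < f p}) {y : E}
    (hy : y ∈ frontier D) : f y = 0 := by
  subst hD
  exact (frontier_lt_subset_eq continuous_const hf hy).symm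

lemma nonneg_on_closure {f : E → ℝ} (hf : Continuous f) {D : Set E} (hD : D = {p | 0 < f p}) {y : E}
    (hy : y ∈ closure D) : 0 ≤ f y := by
  subst hD
  exact closure_lt_subset_le continuous_const hf hy

lemma Geo.oD (G : Geo D Ω g h θ₁ θ₂ r R) : IsOpen D := by
  rw [G.hD]; exact isOpen_lt continuous_const G.hh.continuous

lemma Geo.oΩ (G : Geo D Ω g h θ₁ θ₂ r R) : IsOpen Ω := by
  rw [G.gΩ]; exact isOpen_lt continuous_const G.hg.continuous

lemma Geo.DR (G : Geo D Ω g h θ₁ θ₂ r R) : D ⊆ R := subset_closure.trans G.hDR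

lemma mem_frontier_of {D : Set E} (hD : IsOpen D) {y : E} (hy : y ∈ closure D) (h : y ∉ D) :
    y ∈ frontier D := by
  rw [frontier, hD.interior_eq]; exact ⟨hy, h⟩

lemma barrier (G : Geo D Ω g h θ₁ θ₂ r R) (S : Sol D Ω r Cw δ U X w) (hδ : 0 < δ) {f : E → ℝ}
    (hf : ContinuousOn f (closure D)) {C m : ℝ} (hC : 0 ≤ C)
    (hL : ∀ y ∈ D, ∃ q : ι → ℝ, (∀ i, HasSnd f y (w i y) (q i)) ∧ -C ≤ ∑ i, q i)
    (hm : ∀ y ∈ frontier D, f y ≤ m) :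
    ∀ y ∈ closure D, f y ≤ m + (C + 1) / (θ₂ * δ) * h y := by
  intro y hy
  set K := (C + 1) / (θ₂ * δ) with hK
  have hpos : 0 < θ₂ * δ := mul_pos G.hθ hδ
  have hKe : K * (θ₂ * δ) = C + 1 := by rw [hK]; exact div_mul_cancel₀ _ hpos.ne'
  have hcont : ContinuousOn (fun x => f x + (-K) * h x) (closure D) :=
    hf.add ((continuous_const.mul G.hh.continuous).continuousOn)
  obtain ⟨z, hz, hzm⟩ := G.cD.exists_isMaxOn ⟨y, hy⟩ hcont
  have hyz : f y + (-K) * h y ≤ f z + (-K) * h z := hzm hy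
  by_cases hzD : z ∈ D
  · exfalso
    obtain ⟨q, hq, hqs⟩ := hL z hzD
    have hlm : IsLocalMax (fun x => f x + (-K) * h x) z := 
      hzm.isLocalMax (mem_of_superset (G.oD.mem_nhds hzD) subset_closure)
    have hi : ∀ i, q i + (-K) * fderiv ℝ (fderiv ℝ h) z (w i z) (w i z) ≤ 0 := fun i =>
      ((hq i).add ((hasSnd_of_smooth isOpen_univ G.hh.contDiffOn (mem_univ z) 
        (w i z)).const_mul (-K))).nonpos_of_isLocalMax hlm
    have hs := Finset.sum_nonpos fun i (_ : i ∈ Finset.univ) => hi i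
    rw [Finset.sum_add_distrib, ← Finset.mul_sum] at hs
    have h2 : ∑ i, fderiv ℝ (fderiv ℝ h) z (w i z) (w i z) ≤ -θ₂ * ∑ i, ‖w i z‖ ^ 2 := by
      rw [Finset.mul_sum]
      refine Finset.sum_le_sum fun i _ => ?_
      rw [fderiv2_eq_grad isOpen_univ G.hh.contDiffOn (mem_univ z), real_inner_comm]
      exact G.hc _ _
    have h3 := S.wl z hzD
    have h4 : ∑ i, fderiv ℝ (fderiv ℝ h) z (w i z) (w i z) ≤ -(θ₂ * δ) := by
      nlinarith [G.hθ]
    have hKn : 0 ≤ K := by positivity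
    nlinarith
  · have hzf := mem_frontier_of G.oD hz hzD
    have := hm z hzf
    rw [zero_on_frontier G.hh.continuous G.hD hzf] at hyz
    linarith

lemma pos_right {q : ℝ → ℝ} {d : ℝ} (hq : HasDerivAt q d 0) (hd : 0 < d) :
    ∀ᶠ t in 𝓝[>] (0:ℝ), q 0 < q t := by
  have h1 := (hasDerivAt_iff_tendsto_slope.1 hq).eventually (lt_mem_nhds hd)
  have h2 : 𝓝[>] (0:ℝ) ≤ 𝓝[≠] 0 := nhdsWithin_mono _ (fun x hx => ne_of_gt hx)
  filter_upwards [h1.filter_mono h2, self_mem_nhdsWithin] with t ht ht0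
  have ht0' : 0 < t := ht0
  rw [slope_def_field, sub_zero] at ht
  have := (div_pos_iff_of_pos_right ht0').1 ht
  linarith

lemma Geo.smooth_h (G : Geo D Ω g h θ₁ θ₂ r R) : ContDiffOn ℝ ∞ h univ := G.hh.contDiffOn
lemma Geo.smooth_g (G : Geo D Ω g h θ₁ θ₂ r R) : ContDiffOn ℝ ∞ g univ := G.hg.contDiffOn

/-- first order condition at a boundary maximum -/
lemma bd1 (G : Geo D Ω g h θ₁ θ₂ r R) {F : E → ℝ} {ℓ : E →L[ℝ] ℝ} {y : E} (hy : y ∈ frontier D)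
    (hF : HasFDerivAt F ℓ y) (hm : ∀ x ∈ closure D, F x ≤ F y) :
    ∃ t : ℝ, 0 ≤ t ∧ ∀ a, ℓ a = -t * ⟪gradient h y, a⟫ := by
  have key : ∀ b, 0 < ⟪gradient h y, b⟫ → ℓ b ≤ 0 := by
    intro b hb
    by_contra hl
    push Not at hl
    have e1 := pos_right (line_deriv0 isOpen_univ G.smooth_h (mem_univ y) b) 
      (by rwa [fderiv_eq_grad])
    have hFl : HasDerivAt (fun t : ℝ => F (y + t • b)) (ℓ b) 0 := by
      have := HasFDerivAt.comp_hasDerivAt (0:ℝ) (f := fun t : ℝ => y + t • b) (l := F) (l' := ℓ) 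
        (by simpa using hF) (line_hasDerivAt y b 0)
      exact this
    have e2 := pos_right hFl hl
    obtain ⟨t, h1, h2⟩ := (e1.and e2).exists
    simp only [zero_smul, add_zero] at h1 h2
    rw [zero_on_frontier G.hh.continuous G.hD hy] at h1
    have : y + t • b ∈ D := by rw [G.hD]; exact h1
    exact absurd (hm _ (subset_closure this)) (not_le.2 h2)
  have hν : ⟪gradient h y, gradient h y⟫ = 1 := by
    rw [real_inner_self_eq_norm_sq, G.h1 y hy]; norm_num
  have tang : ∀ a, ⟪gradient h y, a⟫ = 0 → ℓ a ≤ 0 := by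
    intro a ha
    by_contra hl
    push Not at hl
    set ε := ℓ a / (2 * (|ℓ (gradient h y)| + 1)) with hε
    have hεp : 0 < ε := by positivity
    have := key (a + ε • gradient h y) (by rw [inner_add_right, ha, inner_smul_right, hν]; simpa)
    rw [map_add, map_smul, smul_eq_mul] at this
    have h2 : ε * |ℓ (gradient h y)| ≤ ℓ a / 2 := by
      have : ε * (2 * (|ℓ (gradient h y)| + 1)) = ℓ a := by
        rw [hε]; exact div_mul_cancel₀ _ (by positivity)
      nlinarith [abs_nonneg (ℓ (gradient h y))]
    have h3 : -(ε * |ℓ (gradient h y)|) ≤ ε * ℓ (gradient h y) := by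
      nlinarith [neg_abs_le (ℓ (gradient h y))]
    linarith
  refine ⟨-ℓ (gradient h y), ?_, fun a => ?_⟩
  · have := key (gradient h y) (by rw [hν]; norm_num)
    linarith
  · set b := a - ⟪gradient h y, a⟫ • gradient h y with hb
    have hb0 : ⟪gradient h y, b⟫ = 0 := by
      rw [hb, inner_sub_right, inner_smul_right, hν]; ring
    have e1 := tang b hb0
    have e2 := tang (-b) (by rw [inner_neg_right, hb0, neg_zero])
    rw [map_neg] at e2
    have e3 : ℓ b = 0 := by linarith
    rw [hb, map_sub, map_smul, smul_eq_mul] at e3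
    linarith

/-- second derivative along a parabola -/
lemma parab {U : Set E} (hU : IsOpen U) {F : E → ℝ} (hF : ContDiffOn ℝ ∞ F U) {y : E}
    (hy : y ∈ U) (a b : E) :
    (∀ᶠ t in 𝓝 (0:ℝ), HasDerivAt (fun t : ℝ => F (y + (t • a + t ^ 2 • b))) 
      (fderiv ℝ F (y + (t • a + t ^ 2 • b)) (a + (2 * t) • b)) t) ∧ 
    HasDerivAt (fun t : ℝ => fderiv ℝ F (y + (t • a + t ^ 2 • b)) (a + (2 * t) • b)) 
      (fderiv ℝ (fderiv ℝ F) y a a + 2 * fderiv ℝ F y b) 0 := by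
  have hγ : ∀ t : ℝ, HasDerivAt (fun t : ℝ => y + (t • a + t ^ 2 • b)) (a + (2 * t) • b) t := by
    intro t
    have := (((hasDerivAt_id t).smul_const a).add ((hasDerivAt_pow 2 t).smul_const b)).const_add y
    simpa using this
  have hT : Tendsto (fun t : ℝ => y + (t • a + t ^ 2 • b)) (𝓝 0) (𝓝 y) := by
    simpa [ContinuousAt] using (hγ 0).continuousAt
  constructor
  · filter_upwards [hT.eventually (hU.mem_nhds hy)] with t ht
    have h1 : DifferentiableAt ℝ F (y + (t • a + t ^ 2 • b)) :=
      (hF.contDiffAt (hU.mem_nhds ht)).differentiableAt (by simp)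
    exact h1.hasFDerivAt.comp_hasDerivAt t (hγ t)
  · have h1 : DifferentiableAt ℝ (fderiv ℝ F) (y + ((0:ℝ) • a + (0:ℝ) ^ 2 • b)) := by
      have := ((sm_fderiv hU hF).contDiffAt (hU.mem_nhds hy)).differentiableAt (by simp)
      simpa using this
    have h2 := h1.hasFDerivAt.comp_hasDerivAt (0:ℝ) (hγ 0)
    have h3 : HasDerivAt (fun t : ℝ => a + (2 * t) • b) ((2:ℝ) • b) 0 := by
      have := (((hasDerivAt_id (0:ℝ)).const_mul 2).smul_const b).const_add a
      simpa using this
    have := h2.clm_apply h3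
    simpa using this

lemma bd2 (G : Geo D Ω g h θ₁ θ₂ r R) {U : Set E} (hU : IsOpen U) {F : E → ℝ} 
    (hF : ContDiffOn ℝ ∞ F U) {y : E} (hyU : y ∈ U) (hy : y ∈ frontier D) {μ κ : ℝ} {a : E}
    (hm : ∀ x ∈ D, 0 ≤ F x) (h0 : F y = 0) (hd : ∀ b, fderiv ℝ F y b = μ * ⟪gradient h y, b⟫)
    (ha : ⟪gradient h y, a⟫ = 0) (hκ : 0 < fderiv ℝ (fderiv ℝ h) y a a + κ) : 
    0 ≤ fderiv ℝ (fderiv ℝ F) y a a + κ * μ := by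
  by_contra hneg
  push Not at hneg
  have hν : ⟪gradient h y, gradient h y⟫ = 1 := by
    rw [real_inner_self_eq_norm_sq, G.h1 y hy]; norm_num
  obtain ⟨p1, p2⟩ := parab isOpen_univ G.smooth_h (mem_univ y) a ((κ / 2) • gradient h y)
  obtain ⟨p3, p4⟩ := parab hU hF hyU a ((κ / 2) • gradient h y)
  have e1 := second_test p1 p2 (by simp [fderiv_eq_grad, ha]) (by
    rw [fderiv_eq_grad, inner_smul_right, hν]; linarith)
  have e2 := second_test (q := fun t : ℝ => -F (y + (t • a + t ^ 2 • ((κ / 2) • gradient h y)))) 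
    (q' := fun t => - (fderiv ℝ F (y + (t • a + t ^ 2 • ((κ / 2) • gradient h y)))
      (a + (2 * t) • ((κ / 2) • gradient h y)))) (p3.mono fun t ht => ht.neg) p4.neg
      (by simp [hd, ha]) (by rw [hd, inner_smul_right, hν]; linarith)
  obtain ⟨t, ⟨h1, h2⟩, h3⟩ := (((e1.and e2).filter_mono nhdsWithin_le_nhds).and 
    (self_mem_nhdsWithin : {(0:ℝ)}ᶜ ∈ 𝓝[≠] (0:ℝ))).exists
  replace h1 := h1 h3
  replace h2 := h2 h3
  simp only [zero_smul, add_zero, ne_eq, OfNat.ofNat_ne_zero, not_false_eq_true, zero_pow] at h1 h2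
  rw [zero_on_frontier G.hh.continuous G.hD hy] at h1
  have hmem : (y + (t • a + t ^ 2 • ((κ / 2) • gradient h y))) ∈ D := by rw [G.hD]; exact h1
  have := hm _ hmem
  rw [h0] at h2
  linarith

end geo
end core2

section core3
set_option maxSynthPendingDepth 5
set_option linter.unusedSectionVars false
open Filter Topology Set
open scoped ContDiff

variable {E : Type*} [NormedAddCommGroup E] [InnerProductSpace ℝ E] [CompleteSpace E]
variable {ι : Type*} [Fintype ι] {D Ω : Set E} {r : ι → E → E} {Cw δ : ℝ} {U R : Set E}
  {X : E → E} {w : ι → E → E} {g h : E → ℝ} {θ₁ θ₂ : ℝ}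

lemma cbound {V : Type*} [NormedAddCommGroup V] {F : E → V} {s : Set E} (hs : IsCompact s)
    (hF : ContinuousOn F s) : ∃ C, 0 ≤ C ∧ ∀ y ∈ s, ‖F y‖ ≤ C := by
  obtain ⟨C, hC⟩ := hs.exists_bound_of_continuousOn hF
  exact ⟨max C 0, le_max_right _ _, fun y hy => (hC y hy).trans (le_max_left _ _)⟩

lemma Geo.rbound (G : Geo D Ω g h θ₁ θ₂ r R) : ∃ C, 0 ≤ C ∧ ∀ i, ∀ y ∈ closure D,
    ‖r i y‖ ≤ C ∧ ‖fderiv ℝ (r i) y‖ ≤ C ∧ ‖fderiv ℝ (fderiv ℝ (r i)) y‖ ≤ C := by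
  have H : ∀ i, ∃ C, 0 ≤ C ∧ ∀ y ∈ closure D,
    ‖r i y‖ ≤ C ∧ ‖fderiv ℝ (r i) y‖ ≤ C ∧ ‖fderiv ℝ (fderiv ℝ (r i)) y‖ ≤ C := by
    intro i
    have k1 := G.hr i
    have k2 := sm_fderiv G.hR k1
    have k3 := sm_fderiv G.hR k2
    obtain ⟨c1, p1, q1⟩ := cbound G.cD (k1.continuousOn.mono G.hDR)
    obtain ⟨c2, p2, q2⟩ := cbound G.cD (k2.continuousOn.mono G.hDR)
    obtain ⟨c3, p3, q3⟩ := cbound G.cD (k3.continuousOn.mono G.hDR)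
    refine ⟨c1 + c2 + c3, by positivity, fun y hy => ⟨?_, ?_, ?_⟩⟩
    · linarith [q1 y hy]
    · linarith [q2 y hy]
    · linarith [q3 y hy]
  choose C hC hb using H
  refine ⟨∑ i, C i, Finset.sum_nonneg fun i _ => hC i, fun i y hy => ?_⟩
  have := Finset.single_le_sum (fun i _ => hC i) (Finset.mem_univ i)
  obtain ⟨h1, h2, h3⟩ := hb i y hy
  exact ⟨h1.trans this, h2.trans this, h3.trans this⟩

/-- `L ∇v` is bounded. -/
lemma Sol.Lgrad (G : Geo D Ω g h θ₁ θ₂ r R) (S : Sol D Ω r Cw δ U X w) {C : ℝ}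
    (hC : ∀ i, ∀ y ∈ closure D, ‖fderiv ℝ (r i) y‖ ≤ C) (hCw : 0 ≤ Cw) {y : E} (hy : y ∈ D) :
    ‖∑ i, fderiv ℝ (fderiv ℝ X) y (w i y) (w i y)‖ ≤ ∑ _i : ι, 2 * (C * Cw) := by
  set v := ∑ i, fderiv ℝ (fderiv ℝ X) y (w i y) (w i y) with hv
  have e : ⟪v, v⟫ = ∑ i, 2 * ⟪fderiv ℝ (r i) y v, w i y⟫ := by
    rw [← S.d1 G.oD G.hR G.DR G.hr hy v]
    conv_lhs => rw [hv, sum_inner]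
    refine Finset.sum_congr rfl fun i _ => ?_
    rw [← hv, S.s3 (S.memU hy), S.s2 (S.memU hy)]
  have h2 : ⟪v, v⟫ ≤ (∑ _i : ι, 2 * (C * Cw)) * ‖v‖ := by
    rw [e, Finset.sum_mul]
    refine Finset.sum_le_sum fun i _ => ?_
    have h3 : ⟪fderiv ℝ (r i) y v, w i y⟫ ≤ (C * ‖v‖) * Cw := by
      refine (real_inner_le_norm _ _).trans ?_
      have hCi := hC i y (subset_closure hy)
      have hC0 : 0 ≤ C := (norm_nonneg _).trans hCi
      gcongr
      · exact (ContinuousLinearMap.le_opNorm _ _).trans (by gcongr)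
      · exact S.wb y hy i
    linarith
  rw [real_inner_self_eq_norm_mul_norm] at h2
  by_cases h0 : ‖v‖ = 0
  · rw [h0]
    refine Finset.sum_nonneg fun i _ => ?_
    have hC0 : 0 ≤ C := (norm_nonneg _).trans (hC i y (subset_closure hy))
    positivity
  · exact le_of_mul_le_mul_right h2 (lt_of_le_of_ne (norm_nonneg _) (Ne.symm h0))

lemma hasSnd_P (S : Sol D Ω r Cw δ U X w) {P : E × E → ℝ} (hP : ContDiff ℝ ∞ P) {y : E}
    (hy : y ∈ U) (a : E) :
    HasSnd (fun x => P (x, X x)) y a 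
      (fderiv ℝ (fderiv ℝ P) (y, X y) (a, fderiv ℝ X y a) (a, fderiv ℝ X y a) + 
        fderiv ℝ P (y, X y) (0, fderiv ℝ (fderiv ℝ X) y a a)) := by
  have hd : Differentiable ℝ P := hP.differentiable (by simp)
  have hd2 : Differentiable ℝ (fderiv ℝ P) := 
    (hP.fderiv_right (m := ∞) (by simp)).differentiable (by simp)
  refine ⟨fun t => fderiv ℝ P (y + t • a, X (y + t • a)) (a, fderiv ℝ X (y + t • a) a), ?_, ?_⟩
  · filter_upwards [line_deriv S.hU S.hX hy a] with t ht
    exact (hd _).hasFDerivAt.comp_hasDerivAt t ((line_hasDerivAt y a t).prodMk ht)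
  · have h1 := (line_hasDerivAt y a 0).prodMk (line_deriv0 S.hU S.hX hy a)
    have h2 := (hd2 (y + (0:ℝ) • a, X (y + (0:ℝ) • a))).hasFDerivAt.comp_hasDerivAt (0:ℝ) h1
    have h3 := (line_deriv0 S.hU S.sA hy a).clm_apply (hasDerivAt_const 0 a)
    have h4 := (hasDerivAt_const (0:ℝ) a).prodMk h3
    have := h2.clm_apply h4
    simpa using this

lemma Geo.Pbound (G : Geo D Ω g h θ₁ θ₂ r R) (hCw : 0 ≤ Cw) {P : E × E → ℝ}
    (hP : ContDiff ℝ ∞ P) : ∃ C, 0 ≤ C ∧ ∀ (U : Set E) (X : E → E) (w : ι → E → E),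
      Sol D Ω r Cw δ U X w → ∀ y ∈ D, ∃ q : ι → ℝ,
        (∀ i, HasSnd (fun x => P (x, X x)) y (w i y) (q i)) ∧ |∑ i, q i| ≤ C := by
  obtain ⟨Cr, hCr, hr⟩ := G.rbound
  have hP1 : ContDiff ℝ ∞ (fderiv ℝ P) := hP.fderiv_right (m := ∞) (by simp)
  have hP2 : ContDiff ℝ ∞ (fderiv ℝ (fderiv ℝ P)) := hP1.fderiv_right (m := ∞) (by simp)
  obtain ⟨C1, hC1, b1⟩ : ∃ C, 0 ≤ C ∧ ∀ y ∈ closure D ×ˢ closure Ω, ‖fderiv ℝ P y‖ ≤ C := by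
    obtain ⟨C, hC⟩ := (G.cD.prod G.cΩ).exists_bound_of_continuousOn hP1.continuous.continuousOn
    exact ⟨max C 0, le_max_right _ _, fun y hy => (hC y hy).trans (le_max_left _ _)⟩
  obtain ⟨C2, hC2, b2⟩ : ∃ C, 0 ≤ C ∧ ∀ y ∈ closure D ×ˢ closure Ω, 
      ‖fderiv ℝ (fderiv ℝ P) y‖ ≤ C := by
    obtain ⟨C, hC⟩ := (G.cD.prod G.cΩ).exists_bound_of_continuousOn hP2.continuous.continuousOn
    exact ⟨max C 0, le_max_right _ _, fun y hy => (hC y hy).trans (le_max_left _ _)⟩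
  refine ⟨(∑ _i : ι, C2 * (Cw + Cr) * (Cw + Cr)) + C1 * ∑ _i : ι, 2 * (Cr * Cw), by positivity, ?_⟩
  intro U X w S y hy
  refine ⟨_, fun i => hasSnd_P S hP (S.memU hy) (w i y), ?_⟩
  rw [Finset.sum_add_distrib]
  have hmem : (y, X y) ∈ closure D ×ˢ closure Ω := 
    ⟨subset_closure hy, subset_closure (S.XΩ y hy)⟩
  refine (abs_add_le _ _).trans (add_le_add ?_ ?_)
  · refine (Finset.abs_sum_le_sum_abs _ _).trans (Finset.sum_le_sum fun i _ => ?_)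
    have hn : ‖(w i y, fderiv ℝ X y (w i y))‖ ≤ Cw + Cr := by
      rw [S.Aw y hy i, Prod.norm_mk]
      have := (hr i y (subset_closure hy)).1
      have := S.wb y hy i
      exact max_le (by linarith) (by linarith)
    rw [← Real.norm_eq_abs]
    refine (ContinuousLinearMap.le_opNorm₂ _ _ _).trans ?_
    have := b2 _ hmem
    gcongr
  · rw [← map_sum]
    have e : (∑ i, ((0:E), fderiv ℝ (fderiv ℝ X) y (w i y) (w i y))) = 
        (0, ∑ i, fderiv ℝ (fderiv ℝ X) y (w i y) (w i y)) := by
      rw [Prod.ext_iff, Prod.fst_sum, Prod.snd_sum]; simp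
    rw [e, ← Real.norm_eq_abs]
    refine (ContinuousLinearMap.le_opNorm _ _).trans ?_
    have h1 := S.Lgrad G (fun i y hy => (hr i y hy).2.1) hCw hy
    have := b1 _ hmem
    have h2 : ‖((0:E), ∑ i, fderiv ℝ (fderiv ℝ X) y (w i y) (w i y))‖ ≤ ∑ _i : ι, 2 * (Cr * Cw) := by
      rw [Prod.norm_mk, norm_zero]; exact max_le (by positivity) h1
    gcongr

/-- second derivative of `⟨ξ, Aξ⟩` -/
lemma hasSnd_phi (S : Sol D Ω r Cw δ U X w) {ξ : E → E} (hξ : ContDiff ℝ ∞ ξ) {y : E}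
    (hy : y ∈ U) (a : E) :
    HasSnd (fun x => ⟪ξ x, fderiv ℝ X x (ξ x)⟫) y a 
      (⟪ξ y, fderiv ℝ (fderiv ℝ (fderiv ℝ X)) y a a (ξ y)⟫ + 
       4 * ⟪fderiv ℝ (fderiv ℝ X) y a (ξ y), fderiv ℝ ξ y a⟫ + 
       2 * ⟪fderiv ℝ ξ y a, fderiv ℝ X y (fderiv ℝ ξ y a)⟫ + 
       2 * ⟪fderiv ℝ (fderiv ℝ ξ) y a a, fderiv ℝ X y (ξ y)⟫) := by
  have hξ' : ContDiffOn ℝ ∞ ξ univ := hξ.contDiffOn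
  refine ⟨fun t => ⟪ξ (y + t • a), fderiv ℝ (fderiv ℝ X) (y + t • a) a (ξ (y + t • a)) + 
    fderiv ℝ X (y + t • a) (fderiv ℝ ξ (y + t • a) a)⟫ + 
    ⟪fderiv ℝ ξ (y + t • a) a, fderiv ℝ X (y + t • a) (ξ (y + t • a))⟫, ?_, ?_⟩
  · filter_upwards [line_deriv S.hU S.sA hy a, line_deriv isOpen_univ hξ' (mem_univ y) a] with t h1 h2
    exact h2.inner ℝ (h1.clm_apply h2)
  · have x0 := line_deriv0 isOpen_univ hξ' (mem_univ y) a
    have x1 := (line_deriv0 isOpen_univ (sm_fderiv isOpen_univ hξ') (mem_univ y) a).clm_apply 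
      (hasDerivAt_const 0 a)
    have a0 := line_deriv0 S.hU S.sA hy a
    have a1 := (line_deriv0 S.hU S.sB hy a).clm_apply (hasDerivAt_const 0 a)
    have := (x0.inner ℝ ((a1.clm_apply x0).fun_add (a0.clm_apply x1))).fun_add 
      (x1.inner ℝ (a0.clm_apply x0))
    refine this.congr_deriv ?_
    simp only [zero_smul, add_zero, map_zero, inner_add_right]
    rw [← S.s3 hy a (ξ y) (fderiv ℝ ξ y a), ← S.sym y hy (ξ y) _, 
      real_inner_comm (fderiv ℝ ξ y a) (fderiv ℝ (fderiv ℝ X) y a (ξ y)), 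
      real_inner_comm (fderiv ℝ X y (ξ y)) (fderiv ℝ (fderiv ℝ ξ) y a a)]
    ring

lemma Sol.nonneg (S : Sol D Ω r Cw δ U X w) {y : E} (hy : y ∈ closure D) (a : E) : 
    0 ≤ ⟪a, fderiv ℝ X y a⟫ := by
  by_cases ha : a = 0
  · simp [ha]
  · exact (S.pos y hy a ha).le

lemma Sol.Lphi (G : Geo D Ω g h θ₁ θ₂ r R) (S : Sol D Ω r Cw δ U X w) {ξ : E → E} 
    (hξ : ContDiff ℝ ∞ ξ) {y : E} (hy : y ∈ D) : ∃ q : ι → ℝ,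
    (∀ i, HasSnd (fun x => ⟪ξ x, fderiv ℝ X x (ξ x)⟫) y (w i y) (q i)) ∧ 
    ∑ i, (2 * ⟪fderiv ℝ (fderiv ℝ (r i)) y (ξ y) (ξ y), w i y⟫ + 
      4 * ⟪fderiv ℝ (r i) y (ξ y), fderiv ℝ ξ y (w i y)⟫ + 
      2 * ⟪fderiv ℝ (fderiv ℝ ξ) y (w i y) (w i y), fderiv ℝ X y (ξ y)⟫) ≤ ∑ i, q i := by
  refine ⟨_, fun i => hasSnd_phi S hξ (S.memU hy) (w i y), ?_⟩
  simp_rw [S.s7 (S.memU hy)]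
  simp_rw [Finset.sum_add_distrib]
  rw [S.d2 G.oD G.hR G.DR G.hr hy (ξ y)]
  simp_rw [← Finset.sum_add_distrib]
  refine Finset.sum_le_sum fun i _ => ?_
  have e := S.d0 G.oD G.hR G.DR G.hr hy (ξ y) i
  have e3 := S.s2 (S.memU hy) (w i y) (ξ y)
  rw [e3, ← e, inner_add_left]
  have hp := S.nonneg (subset_closure hy) (fderiv ℝ (w i) y (ξ y) - fderiv ℝ ξ y (w i y))
  rw [map_sub, inner_sub_left, inner_sub_right, inner_sub_right, 
    ← S.sym y (S.memU hy) (fderiv ℝ (w i) y (ξ y)) (fderiv ℝ ξ y (w i y)),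
    real_inner_comm (fderiv ℝ X y (fderiv ℝ (w i) y (ξ y))) (fderiv ℝ ξ y (w i y))] at hp
  linarith

end core3

section core4
set_option linter.unusedSectionVars false
set_option maxSynthPendingDepth 5
open Filter Topology Set
open scoped ContDiff

variable {E : Type*} [NormedAddCommGroup E] [InnerProductSpace ℝ E] [CompleteSpace E]
variable {ι : Type*} [Fintype ι] {D Ω : Set E} {r : ι → E → E} {Cw δ : ℝ} {U R : Set E}
  {X : E → E} {w : ι → E → E} {g h : E → ℝ} {θ₁ θ₂ : ℝ}

lemma HasSnd.unique {f : E → ℝ} {y a : E} {p q : ℝ} (h1 : HasSnd f y a p) (h2 : HasSnd f y a q) :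
    p = q := by
  obtain ⟨f', a1, a2⟩ := h1
  obtain ⟨k', b1, b2⟩ := h2
  refine a2.unique (b2.congr_of_eventuallyEq ?_)
  filter_upwards [a1, b1] with t h1 h2
  exact h1.unique h2

lemma fderiv_along {f : E → ℝ} {y a : E} {d : ℝ} (hf : DifferentiableAt ℝ f y)
    (hd : HasDerivAt (fun t : ℝ => f (y + t • a)) d 0) : fderiv ℝ f y a = d := by
  have h1 : HasFDerivAt f (fderiv ℝ f y) (y + (0:ℝ) • a) := by simpa using hf.hasFDerivAt
  exact (h1.comp_hasDerivAt (0:ℝ) (line_hasDerivAt y a 0)).unique hd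

lemma psd_norm {T : E →L[ℝ] E} (hs : ∀ a b, ⟪T a, b⟫ = ⟪a, T b⟫) (hp : ∀ a, 0 ≤ ⟪a, T a⟫) {M : ℝ}
    (hM : 0 ≤ M) (hb : ∀ a, ⟪a, T a⟫ ≤ M * ‖a‖ ^ 2) (a : E) : ‖T a‖ ≤ M * ‖a‖ := by
  have key : ∀ N : ℝ, 0 < N → (∀ a, ⟪a, T a⟫ ≤ N * ‖a‖ ^ 2) → ‖T a‖ ≤ N * ‖a‖ := by
    intro N hN hb
    have h1 := hp (N • a - T a)
    have h2 := hb a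
    have h3 := hb (T a)
    rw [map_sub, map_smul, inner_sub_left, inner_sub_right, inner_sub_right, inner_smul_left,
      inner_smul_right, inner_smul_left, inner_smul_right, ← hs a (T a),
      real_inner_self_eq_norm_sq] at h1
    simp only [conj_trivial] at h1
    have h4 : N * ‖T a‖ ^ 2 ≤ N * (N * ‖a‖) ^ 2 := by nlinarith [mul_pos hN hN]
    have h5 := le_of_mul_le_mul_left h4 hN
    exact abs_le_of_sq_le_sq' h5 (by positivity) |>.2
  refine le_of_forall_pos_le_add fun ε hε => ?_
  have hn : 0 < ‖a‖ + 1 := by positivity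
  have := key (M + ε / (‖a‖ + 1)) (by positivity) (fun b => (hb b).trans (by gcongr; simp; positivity))
  refine this.trans ?_
  rw [add_mul]
  gcongr
  rw [div_mul_eq_mul_div, div_le_iff₀ hn]
  nlinarith

lemma Sol.gX_smooth (G : Geo D Ω g h θ₁ θ₂ r R) (S : Sol D Ω r Cw δ U X w) :
    ContDiffOn ℝ ∞ (fun x => g (X x)) U := G.hg.comp_contDiffOn S.hX

lemma Sol.gX_deriv (G : Geo D Ω g h θ₁ θ₂ r R) (S : Sol D Ω r Cw δ U X w) {y : E} (hy : y ∈ U)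
    (b : E) : fderiv ℝ (fun x => g (X x)) y b = ⟪fderiv ℝ X y (gradient g (X y)), b⟫ := by
  have h1 : DifferentiableAt ℝ X y := (S.hX.contDiffAt (S.hU.mem_nhds hy)).differentiableAt (by simp)
  have h2 : DifferentiableAt ℝ g (X y) := (G.hg.differentiable (by simp)) _
  have := (h2.hasFDerivAt.comp y h1.hasFDerivAt).fderiv
  change fderiv ℝ (g ∘ X) y b = _
  rw [this, S.sym y hy]
  exact fderiv_eq_grad g _ _

lemma Sol.gX_snd (G : Geo D Ω g h θ₁ θ₂ r R) (S : Sol D Ω r Cw δ U X w) {y : E} (hy : y ∈ U)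
    (a : E) : fderiv ℝ (fderiv ℝ (fun x => g (X x))) y a a = 
      ⟪fderiv ℝ (gradient g) (X y) (fderiv ℝ X y a), fderiv ℝ X y a⟫ + 
      ⟪gradient g (X y), fderiv ℝ (fderiv ℝ X) y a a⟫ := by
  refine (hasSnd_of_smooth S.hU (S.gX_smooth G) hy a).unique ?_
  refine ⟨fun t => ⟪gradient g (X (y + t • a)), fderiv ℝ X (y + t • a) a⟫, ?_, ?_⟩
  · filter_upwards [line_deriv S.hU S.hX hy a] with t ht
    have h2 : DifferentiableAt ℝ g (X (y + t • a)) := (G.hg.differentiable (by simp)) _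
    rw [← fderiv_eq_grad]
    exact h2.hasFDerivAt.comp_hasDerivAt t ht
  · have h1 := line_deriv0 S.hU S.hX hy a
    have h2 : DifferentiableAt ℝ (gradient g) (X (y + (0:ℝ) • a)) := 
      ((grad_smooth isOpen_univ G.smooth_g).contDiffAt univ_mem).differentiableAt (by simp)
    have h3 := h2.hasFDerivAt.comp_hasDerivAt (0:ℝ) h1
    have := h3.inner ℝ ((line_deriv0 S.hU S.sA hy a).clm_apply (hasDerivAt_const 0 a))
    simpa [add_comm] using this

lemma Sol.cont (S : Sol D Ω r Cw δ U X w) : ContinuousOn X (closure D) := 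
  S.hX.continuousOn.mono S.hDU

lemma Sol.Xc (G : Geo D Ω g h θ₁ θ₂ r R) (S : Sol D Ω r Cw δ U X w) {y : E} (hy : y ∈ closure D) :
    X y ∈ closure Ω := by
  by_cases hyD : y ∈ D
  · exact subset_closure (S.XΩ y hyD)
  · exact frontier_subset_closure (S.Xf y (mem_frontier_of G.oD hy hyD))

lemma grad_contDiff {f : E → ℝ} (hf : ContDiff ℝ ∞ f) : ContDiff ℝ ∞ (gradient f) := by
  rw [← contDiffOn_univ] at *
  exact grad_smooth isOpen_univ hf

lemma core_mu (G : Geo D Ω g h θ₁ θ₂ r R) (hδ : 0 < δ) (hCw : 0 ≤ Cw) : ∃ K, 0 ≤ K ∧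
    ∀ (U : Set E) (X : E → E) (w : ι → E → E), Sol D Ω r Cw δ U X w → ∀ y ∈ frontier D,
      ∃ μ : ℝ, 0 ≤ μ ∧ μ ≤ K ∧ fderiv ℝ X y (gradient g (X y)) = μ • gradient h y := by
  obtain ⟨C, hC, hP⟩ := G.Pbound (Cw := Cw) (δ := δ) hCw (P := fun z => g z.2) 
    (G.hg.comp contDiff_snd)
  have hp := G.hθ
  refine ⟨(C + 1) / (θ₂ * δ), by positivity, fun U X w S y hy => ?_⟩
  have hyc := frontier_subset_closure hy
  have hyU := S.hDU hyc
  have hd : DifferentiableAt ℝ (fun x => g (X x)) y := 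
    ((S.gX_smooth G).contDiffAt (S.hU.mem_nhds hyU)).differentiableAt (by simp)
  have hz : ∀ x ∈ frontier D, g (X x) = 0 := fun x hx => 
    zero_on_frontier G.hg.continuous G.gΩ (S.Xf x hx)
  have hn : ∀ x ∈ closure D, 0 ≤ g (X x) := fun x hx => 
    nonneg_on_closure G.hg.continuous G.gΩ (S.Xc G hx)
  obtain ⟨t, ht, e1⟩ := bd1 G hy hd.hasFDerivAt.neg (fun x hx => by
    simp only [Pi.neg_apply, neg_le_neg_iff]; rw [hz y hy]; exact hn x hx)
  have hb := barrier G S hδ (f := fun x => g (X x)) (C := C) (m := 0)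
    (G.hg.continuous.comp_continuousOn S.cont) hC (fun x hx => by
      obtain ⟨q, q1, q2⟩ := hP U X w S x hx
      exact ⟨q, q1, (abs_le.1 q2).1⟩) (fun x hx => (hz x hx).le)
  set K := (C + 1) / (θ₂ * δ)
  have hh : DifferentiableAt ℝ h y := (G.hh.differentiable (by simp)) y
  obtain ⟨s, hs, e2⟩ := bd1 G hy (hd.hasFDerivAt.fun_sub (hh.hasFDerivAt.const_mul K)) (fun x hx => by
    have := hb x hx
    rw [hz y hy, zero_on_frontier G.hh.continuous G.hD hy]
    linarith)
  have e1' : ∀ a, fderiv ℝ (fun x => g (X x)) y a = t * ⟪gradient h y, a⟫ := by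
    intro a
    have := e1 a
    simp only [neg_apply] at this
    linarith
  refine ⟨t, ht, ?_, ?_⟩
  · have := e2 (gradient h y)
    simp only [sub_apply, smul_apply, smul_eq_mul] at this
    rw [e1', fderiv_eq_grad, real_inner_self_eq_norm_sq, G.h1 y hy] at this
    linarith
  · refine ext_inner_right ℝ fun b => ?_
    rw [← S.gX_deriv G hyU, e1', inner_smul_left]; simp

lemma core_obl (G : Geo D Ω g h θ₁ θ₂ r R) (hδ : 0 < δ) (hCw : 0 ≤ Cw) : ∃ χ, 0 < χ ∧
    ∀ (U : Set E) (X : E → E) (w : ι → E → E), Sol D Ω r Cw δ U X w → ∀ y ∈ frontier D,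
      χ ≤ ⟪gradient g (X y), gradient h y⟫ := by
  have hNg := grad_contDiff G.hg
  have hNh := grad_contDiff G.hh
  have hPs : ContDiff ℝ ∞ (fun z : E × E => ⟪gradient g z.2, gradient h z.1⟫) := 
    (hNg.comp contDiff_snd).inner ℝ (hNh.comp contDiff_fst)
  obtain ⟨C, hC, hP⟩ := G.Pbound (Cw := Cw) (δ := δ) hCw hPs
  obtain ⟨K0, hK0, hμ⟩ := core_mu (Cw := Cw) G hδ hCw
  have hp := G.hθ
  have hKp : 0 < (C + 1) / (θ₂ * δ) := by positivity
  refine ⟨θ₂ / ((C + 1) / (θ₂ * δ)), by positivity, fun U X w S y' hy' => ?_⟩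
  set K := (C + 1) / (θ₂ * δ) with hK
  have hsm : ContDiffOn ℝ ∞ (fun x => ⟪gradient g (X x), gradient h x⟫) U := 
    (hNg.comp_contDiffOn S.hX).inner ℝ hNh.contDiffOn
  have hfc : IsCompact (frontier D) := 
    G.cD.of_isClosed_subset isClosed_frontier frontier_subset_closure
  obtain ⟨y, hy, hmin⟩ := hfc.exists_isMinOn ⟨y', hy'⟩ 
    (hsm.continuousOn.mono (frontier_subset_closure.trans S.hDU))
  refine le_trans ?_ (hmin hy')
  have hyc := frontier_subset_closure hy
  have hyU := S.hDU hyc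
  obtain ⟨μ, hμ0, -, hμe⟩ := hμ U X w S y hy
  set χ := ⟪gradient g (X y), gradient h y⟫ with hχ
  have hβn : ‖gradient g (X y)‖ = 1 := G.g1 _ (S.Xf y hy)
  have hβ0 : gradient g (X y) ≠ 0 := by intro h0; rw [h0] at hβn; simp at hβn
  have hχ0 : 0 ≤ χ := by
    have := S.pos y hyc _ hβ0
    rw [hμe, inner_smul_right, ← hχ] at this
    by_contra hneg
    push Not at hneg
    nlinarith
  have hd : DifferentiableAt ℝ (fun x => ⟪gradient g (X x), gradient h x⟫) y := 
    (hsm.contDiffAt (S.hU.mem_nhds hyU)).differentiableAt (by simp)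
  have hb := barrier G S hδ (f := fun x => -1 * ⟪gradient g (X x), gradient h x⟫) (C := C) (m := -χ)
    ((continuousOn_const.mul (hsm.continuousOn.mono S.hDU))) hC (fun x hx => by
      obtain ⟨q, q1, q2⟩ := hP U X w S x hx
      refine ⟨fun i => -1 * q i, fun i => (q1 i).const_mul (-1), ?_⟩
      rw [← Finset.mul_sum]
      linarith [(abs_le.1 q2).2]) (fun x hx => by
        have : χ ≤ ⟪gradient g (X x), gradient h x⟫ := hmin hx
        linarith)
  rw [← hK] at hb
  have hh : DifferentiableAt ℝ h y := (G.hh.differentiable (by simp)) y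
  obtain ⟨s, hs, e2⟩ := bd1 G hy ((hd.hasFDerivAt.const_mul (-1)).fun_sub 
    (hh.hasFDerivAt.const_mul K)) (fun x hx => by
    have := hb x hx
    rw [zero_on_frontier G.hh.continuous G.hD hy]
    linarith)
  have e3 := e2 (gradient g (X y))
  simp only [sub_apply, smul_apply, smul_eq_mul] at e3
  have e4 : fderiv ℝ (fun x => ⟪gradient g (X x), gradient h x⟫) y (gradient g (X y)) = 
      ⟪gradient g (X y), fderiv ℝ (gradient h) y (gradient g (X y))⟫ + 
      ⟪fderiv ℝ (gradient g) (X y) (fderiv ℝ X y (gradient g (X y))), gradient h y⟫ := by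
    apply fderiv_along hd
    have h1 := line_deriv0 S.hU S.hX hyU (gradient g (X y))
    have h2 : DifferentiableAt ℝ (gradient g) (X (y + (0:ℝ) • gradient g (X y))) := 
      hNg.differentiable (by simp) _
    have h3 := h2.hasFDerivAt.comp_hasDerivAt (0:ℝ) h1
    have := h3.inner ℝ (line_deriv0 isOpen_univ hNh.contDiffOn (mem_univ y) (gradient g (X y)))
    simpa using this
  rw [e4, hμe, map_smul, inner_smul_left, fderiv_eq_grad, real_inner_comm (gradient g (X y)), ← hχ] at e3
  simp only [conj_trivial] at e3
  have k1 := G.hc y (gradient g (X y))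
  have k2 := G.gc (X y) (gradient h y)
  rw [hβn] at k1
  rw [G.h1 y hy, real_inner_comm] at k2
  rw [div_le_iff₀ hKp]
  have k3 : 0 ≤ s * χ := by positivity
  have k4 : μ * ⟪fderiv ℝ (gradient g) (X y) (gradient h y), gradient h y⟫ ≤ 0 := by
    have : ⟪fderiv ℝ (gradient g) (X y) (gradient h y), gradient h y⟫ ≤ 0 := by linarith [G.gθ]
    nlinarith
  nlinarith

end core4

section core5
set_option linter.unusedSectionVars false
set_option maxSynthPendingDepth 5
open Filter Topology Set
open scoped ContDiff

variable {E : Type*} [NormedAddCommGroup E] [InnerProductSpace ℝ E] [CompleteSpace E]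
variable {ι : Type*} [Fintype ι] {D Ω : Set E} {r : ι → E → E} {Cw δ : ℝ} {U R : Set E}
  {X : E → E} {w : ι → E → E} {g h : E → ℝ} {θ₁ θ₂ : ℝ}

lemma red_bdry (G : Geo D Ω g h θ₁ θ₂ r R) (S : Sol D Ω r Cw δ U X w) {χ₀ K M1 : ℝ} (hχ₀ : 0 < χ₀)
    {y : E} (hy : y ∈ frontier D) (hχ : χ₀ ≤ ⟪gradient g (X y), gradient h y⟫)
    {μ : ℝ} (hμ0 : 0 ≤ μ) (hμK : μ ≤ K)
    (hμ : fderiv ℝ X y (gradient g (X y)) = μ • gradient h y) (hM1 : 0 ≤ M1)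
    (hT : ∀ τ, ⟪gradient h y, τ⟫ = 0 → ⟪τ, fderiv ℝ X y τ⟫ ≤ M1 * ‖τ‖ ^ 2) (a : E) :
    ⟪a, fderiv ℝ X y a⟫ ≤ ((1 + 1 / χ₀) ^ 2 * M1 + K / χ₀ ^ 2) * ‖a‖ ^ 2 := by
  have hyU := S.hDU (frontier_subset_closure hy)
  have hβn : ‖gradient g (X y)‖ = 1 := G.g1 _ (S.Xf y hy)
  have hνn := G.h1 y hy
  set β := gradient g (X y)
  set ν := gradient h y
  set χ := ⟪β, ν⟫ with hχe
  have hχ0 : 0 < χ := hχ₀.trans_le hχ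
  have hχ1 : χ ≤ 1 := by
    have := real_inner_le_norm β ν
    rw [hβn, hνn] at this; linarith
  set b := ⟪ν, a⟫ / χ with hb
  set τ := a - b • β with hτ
  have hbχ : b * χ = ⟪ν, a⟫ := div_mul_cancel₀ _ hχ0.ne'
  have hντ : ⟪ν, τ⟫ = 0 := by
    rw [hτ, inner_sub_right, inner_smul_right, real_inner_comm β ν, ← hχe, hbχ, sub_self]
  have hbb : |b| ≤ ‖a‖ / χ₀ := by
    rw [hb, abs_div, abs_of_pos hχ0]
    have := abs_real_inner_le_norm ν a
    rw [hνn, one_mul] at this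
    gcongr
  have hτn : ‖τ‖ ≤ (1 + 1 / χ₀) * ‖a‖ := by
    refine (norm_sub_le _ _).trans ?_
    rw [norm_smul, hβn, Real.norm_eq_abs, mul_one]
    have : (1 + 1 / χ₀) * ‖a‖ = ‖a‖ + ‖a‖ / χ₀ := by ring
    rw [this]; linarith
  have ha : a = τ + b • β := by rw [hτ]; abel
  have e : ⟪a, fderiv ℝ X y a⟫ = ⟪τ, fderiv ℝ X y τ⟫ + b ^ 2 * (μ * χ) := by
    have e1 : ⟪β, fderiv ℝ X y τ⟫ = 0 := by
      rw [← S.sym y hyU, hμ, inner_smul_left, hντ, mul_zero]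
    have e2 : ⟪τ, ν⟫ = 0 := by rw [real_inner_comm]; exact hντ
    conv_lhs => rw [ha]
    simp only [map_add, map_smul, inner_add_left, inner_add_right, inner_smul_left, 
      inner_smul_right, hμ, e1, e2, ← hχe, conj_trivial]
    ring
  rw [e, add_mul]
  refine add_le_add ?_ ?_
  · calc _ ≤ M1 * ‖τ‖ ^ 2 := hT τ hντ
      _ ≤ M1 * ((1 + 1 / χ₀) * ‖a‖) ^ 2 := by gcongr
      _ = _ := by ring
  · have h1 : b ^ 2 ≤ (‖a‖ / χ₀) ^ 2 := by rw [← sq_abs b]; gcongr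
    have h2 : μ * χ ≤ K := by nlinarith
    calc _ ≤ (‖a‖ / χ₀) ^ 2 * K := by gcongr
      _ = _ := by ring

lemma core_red (G : Geo D Ω g h θ₁ θ₂ r R) (hδ : 0 < δ) (hCw : 0 ≤ Cw) : ∃ C1 C2 : ℝ, 
    0 ≤ C1 ∧ 0 ≤ C2 ∧
    ∀ (U : Set E) (X : E → E) (w : ι → E → E), Sol D Ω r Cw δ U X w → ∀ M1, 0 ≤ M1 → 
      (∀ y ∈ frontier D, ∀ τ, ⟪gradient h y, τ⟫ = 0 → ⟪τ, fderiv ℝ X y τ⟫ ≤ M1 * ‖τ‖ ^ 2) → 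
      ∀ y ∈ closure D, ∀ a, ⟪a, fderiv ℝ X y a⟫ ≤ (C1 * M1 + C2) * ‖a‖ ^ 2 := by
  obtain ⟨K, hK, hμ⟩ := core_mu (Cw := Cw) G hδ hCw
  obtain ⟨χ₀, hχ₀, hχ⟩ := core_obl (Cw := Cw) G hδ hCw
  obtain ⟨Cr, hCr, hr⟩ := G.rbound
  obtain ⟨H, hH, hHb⟩ := cbound G.cD G.hh.continuous.continuousOn
  have hp := G.hθ
  set Cs := ∑ _i : ι, 2 * (Cr * Cw) with hCs
  have hCs0 : 0 ≤ Cs := Finset.sum_nonneg fun i _ => by positivity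
  refine ⟨(1 + 1 / χ₀) ^ 2, K / χ₀ ^ 2 + (Cs + 1) / (θ₂ * δ) * H, by positivity, by positivity, ?_⟩
  intro U X w S M1 hM1 hT y hy a
  have unit : ∀ a : E, ‖a‖ = 1 → ⟪a, fderiv ℝ X y a⟫ ≤ 
      (1 + 1 / χ₀) ^ 2 * M1 + (K / χ₀ ^ 2 + (Cs + 1) / (θ₂ * δ) * H) := by
    intro a ha
    have hb := barrier G S hδ (f := fun x => ⟪a, fderiv ℝ X x a⟫) (C := Cs) 
      (m := (1 + 1 / χ₀) ^ 2 * M1 + K / χ₀ ^ 2) 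
      (continuousOn_const.inner ((S.sA.continuousOn.mono S.hDU).clm_apply continuousOn_const)) hCs0 
      (fun x hx => by
        obtain ⟨q, q1, q2⟩ := S.Lphi G (ξ := fun _ => a) contDiff_const hx
        refine ⟨q, q1, le_trans ?_ q2⟩
        rw [hCs, ← Finset.sum_neg_distrib]
        refine Finset.sum_le_sum fun i _ => ?_
        have h1 : fderiv ℝ (fun _ : E => a) = fun _ => 0 := by ext; simp
        simp only [h1]
        have h2 : fderiv ℝ (fun _ : E => (0 : E →L[ℝ] E)) x = 0 := by simp
        rw [h2]
        simp only [zero_apply, inner_zero_left, inner_zero_right, mul_zero, add_zero]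
        have h3 : |⟪fderiv ℝ (fderiv ℝ (r i)) x a a, w i x⟫| ≤ Cr * Cw := by
          refine (abs_real_inner_le_norm _ _).trans ?_
          have := S.wb x hx i
          have h4 := ContinuousLinearMap.le_opNorm₂ (fderiv ℝ (fderiv ℝ (r i)) x) a a
          rw [ha, mul_one, mul_one] at h4
          have h5 := (hr i x (subset_closure hx)).2.2
          have h6 := h4.trans h5
          gcongr
        linarith [(abs_le.1 h3).1])
      (fun x hx => by
        obtain ⟨μ, m1, m2, m3⟩ := hμ U X w S x hx
        have := red_bdry G S hχ₀ hx (hχ U X w S x hx) m1 m2 m3 hM1 (hT x hx) a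
        rw [ha] at this
        simpa using this) y hy
    have h7 : h y ≤ H := (le_abs_self _).trans (hHb y hy)
    have h8 : (Cs + 1) / (θ₂ * δ) * h y ≤ (Cs + 1) / (θ₂ * δ) * H := by gcongr
    linarith
  by_cases ha : a = 0
  · simp [ha]
  have hn : 0 < ‖a‖ := norm_pos_iff.2 ha
  have := unit (‖a‖⁻¹ • a) (by rw [norm_smul, norm_inv, norm_norm, inv_mul_cancel₀ hn.ne'])
  rw [map_smul, inner_smul_left, inner_smul_right] at this
  simp only [conj_trivial] at this
  rw [← mul_assoc, ← sq, inv_pow, inv_mul_le_iff₀ (by positivity)] at this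
  linarith

lemma hasSnd_p2 {N : E → E} (hN : ContDiff ℝ ∞ N) (τ y a : E) :
    HasSnd (fun x => ⟪N x, τ⟫ ^ 2) y a (2 * ⟪fderiv ℝ N y a, τ⟫ ^ 2 + 
      2 * ⟪N y, τ⟫ * ⟪fderiv ℝ (fderiv ℝ N) y a a, τ⟫) := by
  have hN' : ContDiffOn ℝ ∞ N univ := hN.contDiffOn
  refine ⟨fun t => 2 * ⟪N (y + t • a), τ⟫ * ⟪fderiv ℝ N (y + t • a) a, τ⟫, ?_, ?_⟩
  · filter_upwards [line_deriv isOpen_univ hN' (mem_univ y) a] with t h1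
    have := (h1.inner ℝ (hasDerivAt_const t τ)).fun_pow 2
    simpa using this
  · have x0 := (line_deriv0 isOpen_univ hN' (mem_univ y) a).inner ℝ (hasDerivAt_const 0 τ)
    have x1 := ((line_deriv0 isOpen_univ (sm_fderiv isOpen_univ hN') (mem_univ y) a).clm_apply 
      (hasDerivAt_const 0 a)).inner ℝ (hasDerivAt_const 0 τ)
    have := (x0.const_mul 2).fun_mul x1
    refine this.congr_deriv ?_
    simp
    ring

/-- tangential projection -/
def Tp (N : E → E) (y : E) : E →L[ℝ] E :=
  ContinuousLinearMap.id ℝ E - (innerSL ℝ (N y)).smulRight (N y)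

lemma Tp_apply (N : E → E) (y τ : E) : Tp N y τ = τ - ⟪N y, τ⟫ • N y := by
  simp [Tp]

lemma Tp_smooth {N : E → E} (hN : ContDiff ℝ ∞ N) : ContDiff ℝ ∞ (Tp N) := by
  unfold Tp
  exact contDiff_const.sub (((innerSL ℝ).contDiff.comp hN).smulRight hN)

lemma Tp_d1 {N : E → E} (hN : ContDiff ℝ ∞ N) (y τ a : E) : 
    fderiv ℝ (fun x => Tp N x τ) y a = fderiv ℝ (Tp N) y a τ := by
  have h1 : DifferentiableAt ℝ (Tp N) y := (Tp_smooth hN).differentiable (by simp) y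
  rw [fderiv_clm_apply h1 (by fun_prop)]
  simp

lemma Tp_d2 {N : E → E} (hN : ContDiff ℝ ∞ N) (y τ a : E) : 
    fderiv ℝ (fderiv ℝ (fun x => Tp N x τ)) y a a = fderiv ℝ (fderiv ℝ (Tp N)) y a a τ := by
  have hs : ContDiffOn ℝ ∞ (fun x => Tp N x τ) univ := 
    ((Tp_smooth hN).clm_apply contDiff_const).contDiffOn
  have hT := (Tp_smooth hN).contDiffOn (s := univ)
  have h1 := (line_deriv0 isOpen_univ (sm_fderiv isOpen_univ hs) (mem_univ y) a).clm_apply 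
    (hasDerivAt_const 0 a)
  have h2 := ((line_deriv0 isOpen_univ (sm_fderiv isOpen_univ hT) (mem_univ y) a).clm_apply 
    (hasDerivAt_const 0 a)).clm_apply (hasDerivAt_const 0 τ)
  have := line_deriv_unique (F := fun x => fderiv ℝ (fun x => Tp N x τ) x a) 
    (G := fun x => fderiv ℝ (Tp N) x a τ) isOpen_univ (mem_univ y) a 
    (fun x _ => Tp_d1 hN x τ a) h1 h2
  simpa using this

lemma core_tan (G : Geo D Ω g h θ₁ θ₂ r R) (hδ : 0 < δ) (hCw : 0 ≤ Cw) : ∃ c0 c1 : ℝ, 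
    0 ≤ c0 ∧ 0 ≤ c1 ∧
    ∀ (U : Set E) (X : E → E) (w : ι → E → E), Sol D Ω r Cw δ U X w → ∀ M1 M, 0 ≤ M1 → 0 ≤ M →
      (∀ y ∈ frontier D, ∀ τ, ⟪gradient h y, τ⟫ = 0 → ⟪τ, fderiv ℝ X y τ⟫ ≤ M1 * ‖τ‖ ^ 2) → 
      (∀ y ∈ closure D, ∀ a, ⟪a, fderiv ℝ X y a⟫ ≤ M * ‖a‖ ^ 2) → 
      ∀ y ∈ frontier D, ∀ τ, ‖τ‖ = 1 → ⟪gradient h y, τ⟫ = 0 → ⟪τ, fderiv ℝ X y τ⟫ = M1 → 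
      θ₁ * M1 ^ 2 ≤ c0 + c1 * (M + M1) := by
  obtain ⟨K0, hK0, hμ⟩ := core_mu (Cw := Cw) G hδ hCw
  obtain ⟨χ₀, hχ₀, hχ⟩ := core_obl (Cw := Cw) G hδ hCw
  obtain ⟨Cr, hCr, hr⟩ := G.rbound
  have hN := grad_contDiff G.hh
  have hN1 : ContDiff ℝ ∞ (fderiv ℝ (gradient h)) := hN.fderiv_right (m := ∞) (by simp)
  have hN2 : ContDiff ℝ ∞ (fderiv ℝ (fderiv ℝ (gradient h))) := hN1.fderiv_right (m := ∞) (by simp)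
  have hT := Tp_smooth hN
  have hT1 : ContDiff ℝ ∞ (fderiv ℝ (Tp (gradient h))) := hT.fderiv_right (m := ∞) (by simp)
  have hT2 : ContDiff ℝ ∞ (fderiv ℝ (fderiv ℝ (Tp (gradient h)))) := 
    hT1.fderiv_right (m := ∞) (by simp)
  obtain ⟨Q, hQ, q0, q1, q2, q3, q4, q5⟩ : ∃ Q, 0 ≤ Q ∧ (∀ y ∈ closure D, ‖gradient h y‖ ≤ Q) ∧ 
      (∀ y ∈ closure D, ‖fderiv ℝ (gradient h) y‖ ≤ Q) ∧ 
      (∀ y ∈ closure D, ‖fderiv ℝ (fderiv ℝ (gradient h)) y‖ ≤ Q) ∧ 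
      (∀ y ∈ closure D, ‖Tp (gradient h) y‖ ≤ Q) ∧ 
      (∀ y ∈ closure D, ‖fderiv ℝ (Tp (gradient h)) y‖ ≤ Q) ∧
      (∀ y ∈ closure D, ‖fderiv ℝ (fderiv ℝ (Tp (gradient h))) y‖ ≤ Q) := by
    obtain ⟨a0, b0, e0⟩ := cbound G.cD hN.continuous.continuousOn
    obtain ⟨a1, b1, e1⟩ := cbound G.cD hN1.continuous.continuousOn
    obtain ⟨a2, b2, e2⟩ := cbound G.cD hN2.continuous.continuousOn
    obtain ⟨a3, b3, e3⟩ := cbound G.cD hT.continuous.continuousOn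
    obtain ⟨a4, b4, e4⟩ := cbound G.cD hT1.continuous.continuousOn
    obtain ⟨a5, b5, e5⟩ := cbound G.cD hT2.continuous.continuousOn
    refine ⟨a0 + a1 + a2 + a3 + a4 + a5, by positivity, fun y hy => ?_, fun y hy => ?_, 
      fun y hy => ?_, fun y hy => ?_, fun y hy => ?_, fun y hy => ?_⟩
    · linarith [e0 y hy]
    · linarith [e1 y hy]
    · linarith [e2 y hy]
    · linarith [e3 y hy]
    · linarith [e4 y hy]
    · linarith [e5 y hy]
  have hp := G.hθ
  set m : ℝ := (Fintype.card ι : ℝ) with hm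
  have hm0 : 0 ≤ m := by positivity
  set ca : ℝ := m * (2 * (Cr * Q * Q * Cw) + 4 * (Cr * Q * (Q * Cw))) with hca
  set cb : ℝ := m * (2 * (Q * Cw * Cw * Q)) with hcb
  have hca0 : 0 ≤ ca := by positivity
  have hcb0 : 0 ≤ cb := by positivity
  refine ⟨(ca + 1) / (θ₂ * δ) + (Q + 1) * K0, cb / (θ₂ * δ) + 2 * Q, by positivity, 
    by positivity, ?_⟩
  intro U X w S M1 M hM1 hM hTan hForm y0 hy0 τ0 hτ0 hντ hMe
  have hyc := frontier_subset_closure hy0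
  have hyU := S.hDU hyc
  have hAn : ∀ y ∈ closure D, ∀ a, ‖fderiv ℝ X y a‖ ≤ M * ‖a‖ := fun y hy a => 
    psd_norm (S.sym y (S.hDU hy)) (S.nonneg hy) hM (hForm y hy) a
  set ξ : E → E := fun x => Tp (gradient h) x τ0 with hξ
  have hξs : ContDiff ℝ ∞ ξ := hT.clm_apply contDiff_const
  have hξn : ∀ y ∈ closure D, ‖ξ y‖ ≤ Q := fun y hy => by
    have := (Tp (gradient h) y).le_of_opNorm_le (q3 y hy) τ0
    rwa [hτ0, mul_one] at this
  have hξ1 : ∀ y ∈ closure D, ∀ a, ‖fderiv ℝ ξ y a‖ ≤ Q * ‖a‖ := fun y hy a => by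
    rw [hξ, Tp_d1 hN]
    have h1 := ((fderiv ℝ (Tp (gradient h)) y) a).le_opNorm τ0
    rw [hτ0, mul_one] at h1
    exact h1.trans ((fderiv ℝ (Tp (gradient h)) y).le_of_opNorm_le (q4 y hy) a)
  have hξ2 : ∀ y ∈ closure D, ∀ a, ‖fderiv ℝ (fderiv ℝ ξ) y a a‖ ≤ Q * ‖a‖ * ‖a‖ := fun y hy a => by
    rw [hξ, Tp_d2 hN]
    have h1 := ((fderiv ℝ (fderiv ℝ (Tp (gradient h))) y) a a).le_opNorm τ0
    rw [hτ0, mul_one] at h1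
    refine h1.trans ((ContinuousLinearMap.le_opNorm₂ _ _ _).trans ?_)
    have := q5 y hy
    gcongr
  have hξ0 : ξ y0 = τ0 := by simp only [hξ, Tp_apply, hντ]; simp
  have hC0 : 0 ≤ ca + cb * (M + M1) := by positivity
  -- barrier
  have hfs : ContDiffOn ℝ ∞ (fun x => ⟪ξ x, fderiv ℝ X x (ξ x)⟫ + M1 * ⟪gradient h x, τ0⟫ ^ 2) U := 
    (hξs.contDiffOn.inner ℝ (S.sA.clm_apply hξs.contDiffOn)).add 
      (contDiffOn_const.mul ((hN.contDiffOn.inner ℝ contDiffOn_const).pow 2))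
  have hb := barrier G S hδ (f := fun x => ⟪ξ x, fderiv ℝ X x (ξ x)⟫ + M1 * ⟪gradient h x, τ0⟫ ^ 2) 
    (C := ca + cb * (M + M1)) (m := M1) (hfs.continuousOn.mono S.hDU) hC0 (fun x hx => by
      obtain ⟨q, p1, p2⟩ := S.Lphi G hξs hx
      have hxc := subset_closure hx
      refine ⟨_, fun i => (p1 i).add ((hasSnd_p2 hN τ0 x (w i x)).const_mul M1), ?_⟩
      rw [Finset.sum_add_distrib]
      refine le_trans ?_ (add_le_add_left p2 _)
      rw [← Finset.sum_add_distrib]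
      have e : -(ca + cb * (M + M1)) = ∑ _i : ι, -(2 * (Cr * Q * Q * Cw) + 4 * (Cr * Q * (Q * Cw)) + 
          (2 * (Q * Cw * Cw * Q)) * (M + M1)) := by
        rw [Finset.sum_const, Finset.card_univ, nsmul_eq_mul, ← hm, hca, hcb]; ring
      rw [e]
      refine Finset.sum_le_sum fun i _ => ?_
      have hwb := S.wb x hx i
      obtain ⟨r0, r1, r2⟩ := hr i x hxc
      have t1 : |⟪fderiv ℝ (fderiv ℝ (r i)) x (ξ x) (ξ x), w i x⟫| ≤ Cr * Q * Q * Cw := by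
        refine (abs_real_inner_le_norm _ _).trans ?_
        have h4 := ContinuousLinearMap.le_opNorm₂ (fderiv ℝ (fderiv ℝ (r i)) x) (ξ x) (ξ x)
        have h5 := hξn x hxc
        have h6 : ‖fderiv ℝ (fderiv ℝ (r i)) x (ξ x) (ξ x)‖ ≤ Cr * Q * Q := h4.trans (by gcongr)
        gcongr
      have t2 : |⟪fderiv ℝ (r i) x (ξ x), fderiv ℝ ξ x (w i x)⟫| ≤ Cr * Q * (Q * Cw) := by
        refine (abs_real_inner_le_norm _ _).trans ?_
        have h4 := (fderiv ℝ (r i) x).le_opNorm (ξ x)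
        have h5 := hξn x hxc
        have h6 : ‖fderiv ℝ (r i) x (ξ x)‖ ≤ Cr * Q := h4.trans (by gcongr)
        have h7 : ‖fderiv ℝ ξ x (w i x)‖ ≤ Q * Cw := (hξ1 x hxc _).trans (by gcongr)
        gcongr
      have t3 : |⟪fderiv ℝ (fderiv ℝ ξ) x (w i x) (w i x), fderiv ℝ X x (ξ x)⟫| ≤ 
          Q * Cw * Cw * (M * Q) := by
        refine (abs_real_inner_le_norm _ _).trans ?_
        have h5 := hξn x hxc
        have h6 : ‖fderiv ℝ (fderiv ℝ ξ) x (w i x) (w i x)‖ ≤ Q * Cw * Cw := 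
          (hξ2 x hxc _).trans (by gcongr)
        have h7 : ‖fderiv ℝ X x (ξ x)‖ ≤ M * Q := (hAn x hxc _).trans (by gcongr)
        gcongr
      have t4 : |⟪gradient h x, τ0⟫ * ⟪fderiv ℝ (fderiv ℝ (gradient h)) x (w i x) (w i x), τ0⟫| ≤ 
          Q * (Q * Cw * Cw) := by
        rw [abs_mul]
        have h5 := (abs_real_inner_le_norm (gradient h x) τ0)
        rw [hτ0, mul_one] at h5
        have h6 := (abs_real_inner_le_norm (fderiv ℝ (fderiv ℝ (gradient h)) x (w i x) (w i x)) τ0)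
        rw [hτ0, mul_one] at h6
        have h7 : ‖fderiv ℝ (fderiv ℝ (gradient h)) x (w i x) (w i x)‖ ≤ Q * Cw * Cw := by
          refine (ContinuousLinearMap.le_opNorm₂ _ _ _).trans ?_
          have := q2 x hxc
          gcongr
        have h8 := h5.trans (q0 x hxc)
        have h9 := h6.trans h7
        gcongr
      have t5 := mul_le_mul_of_nonneg_left (abs_le.1 t4).1 hM1
      have t6 : 0 ≤ M1 * ⟪fderiv ℝ (gradient h) x (w i x), τ0⟫ ^ 2 := by positivity
      linarith [(abs_le.1 t1).1, (abs_le.1 t2).1, (abs_le.1 t3).1])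
    (fun x hx => by
      have hν1 := G.h1 x hx
      have h1 : ⟪gradient h x, ξ x⟫ = 0 := by
        simp only [hξ, Tp_apply]
        rw [inner_sub_right, inner_smul_right, real_inner_self_eq_norm_sq, hν1]; ring
      have h2 : ‖ξ x‖ ^ 2 = 1 - ⟪gradient h x, τ0⟫ ^ 2 := by
        have : ξ x = τ0 - ⟪gradient h x, τ0⟫ • gradient h x := by simp only [hξ, Tp_apply]
        rw [← real_inner_self_eq_norm_sq]
        nth_rw 1 [this]
        rw [inner_sub_left, inner_smul_left, h1, this, inner_sub_right, inner_smul_right, 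
          real_inner_self_eq_norm_sq, hτ0, real_inner_comm (gradient h x) τ0]
        ring
      have h3 := hTan x hx _ h1
      rw [h2] at h3
      linarith)
  set Kb := (ca + cb * (M + M1) + 1) / (θ₂ * δ) with hKb
  have hKb0 : 0 ≤ Kb := by positivity
  have hd : DifferentiableAt ℝ (fun x => ⟪ξ x, fderiv ℝ X x (ξ x)⟫ + M1 * ⟪gradient h x, τ0⟫ ^ 2) y0 := 
    (hfs.contDiffAt (S.hU.mem_nhds hyU)).differentiableAt (by simp)
  have hh : DifferentiableAt ℝ h y0 := (G.hh.differentiable (by simp)) y0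
  obtain ⟨s, hs, e2⟩ := bd1 G hy0 (hd.hasFDerivAt.fun_sub 
    (hh.hasFDerivAt.const_mul Kb)) (fun x hx => by
    have := hb x hx
    rw [zero_on_frontier G.hh.continuous G.hD hy0, hξ0, hντ, hMe]
    linarith)
  obtain ⟨μ, m1, m2, m3⟩ := hμ U X w S y0 hy0
  have hχy := hχ U X w S y0 hy0
  have hβn : ‖gradient g (X y0)‖ = 1 := G.g1 _ (S.Xf y0 hy0)
  have hνn := G.h1 y0 hy0
  have e4 : fderiv ℝ (fun x => ⟪ξ x, fderiv ℝ X x (ξ x)⟫ + M1 * ⟪gradient h x, τ0⟫ ^ 2) y0 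
      (gradient g (X y0)) = 
      ⟪τ0, fderiv ℝ (fderiv ℝ X) y0 (gradient g (X y0)) τ0⟫ + 
      2 * ⟪fderiv ℝ ξ y0 (gradient g (X y0)), fderiv ℝ X y0 τ0⟫ := by
    apply fderiv_along hd
    set β := gradient g (X y0)
    have x0 := line_deriv0 isOpen_univ hξs.contDiffOn (mem_univ y0) β
    have a0 := line_deriv0 S.hU S.sA hyU β
    have n0 := (line_deriv0 isOpen_univ hN.contDiffOn (mem_univ y0) β).inner ℝ (hasDerivAt_const 0 τ0)
    have := (x0.inner ℝ (a0.clm_apply x0)).fun_add ((n0.fun_pow 2).const_mul M1)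
    refine this.congr_deriv ?_
    simp only [zero_smul, add_zero, hξ0, hντ, inner_add_right]
    rw [← S.sym y0 hyU τ0, real_inner_comm (fderiv ℝ X y0 τ0)]
    simp
    ring
  have e3 := e2 (gradient g (X y0))
  simp only [sub_apply, smul_apply, smul_eq_mul] at e3
  rw [e4, fderiv_eq_grad] at e3
  have hχ1 : ⟪gradient h y0, gradient g (X y0)⟫ ≤ 1 := by
    have := real_inner_le_norm (gradient h y0) (gradient g (X y0))
    rw [hβn, hνn] at this; linarith
  rw [real_inner_comm] at hχy
  have hχ0 : 0 < ⟪gradient h y0, gradient g (X y0)⟫ := hχ₀.trans_le hχy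
  have k1 : |⟪fderiv ℝ ξ y0 (gradient g (X y0)), fderiv ℝ X y0 τ0⟫| ≤ Q * M := by
    refine (abs_real_inner_le_norm _ _).trans ?_
    have h1 := hξ1 y0 hyc (gradient g (X y0))
    have h2 := hAn y0 hyc τ0
    rw [hβn, mul_one] at h1
    rw [hτ0, mul_one] at h2
    gcongr
  have k2 : ⟪τ0, fderiv ℝ (fderiv ℝ X) y0 (gradient g (X y0)) τ0⟫ ≤ Kb + 2 * (Q * M) := by
    have : 0 ≤ s * ⟪gradient h y0, gradient g (X y0)⟫ := by positivity
    nlinarith [(abs_le.1 k1).1]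
  have b2 := bd2 G S.hU (S.gX_smooth G) hyU hy0 (μ := μ) (κ := Q + 1) (a := τ0) 
    (fun x hx => nonneg_on_closure G.hg.continuous G.gΩ (S.Xc G (subset_closure hx)))
    (zero_on_frontier G.hg.continuous G.gΩ (S.Xf y0 hy0)) 
    (fun b => by rw [S.gX_deriv G hyU, m3, inner_smul_left]; simp) hντ (by
      rw [fderiv2_eq_grad isOpen_univ G.smooth_h (mem_univ y0)]
      have h1 := abs_real_inner_le_norm (fderiv ℝ (gradient h) y0 τ0) τ0
      have h2 := (fderiv ℝ (gradient h) y0).le_of_opNorm_le (q1 y0 hyc) τ0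
      rw [hτ0, mul_one] at h1 h2
      linarith [(abs_le.1 (h1.trans h2)).1])
  rw [S.gX_snd G hyU, S.s2 hyU] at b2
  have k3 : ⟪gradient g (X y0), fderiv ℝ (fderiv ℝ X) y0 τ0 τ0⟫ = 
      ⟪τ0, fderiv ℝ (fderiv ℝ X) y0 (gradient g (X y0)) τ0⟫ := by
    rw [← S.s3 hyU, S.s2 hyU, real_inner_comm]
  have k4 := G.gc (X y0) (fderiv ℝ X y0 τ0)
  rw [real_inner_comm] at k4
  rw [k3] at b2
  have k5 : M1 ^ 2 ≤ ‖fderiv ℝ X y0 τ0‖ ^ 2 := by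
    have := real_inner_le_norm τ0 (fderiv ℝ X y0 τ0)
    rw [hMe, hτ0, one_mul] at this
    gcongr
  have k6 : (Q + 1) * μ ≤ (Q + 1) * K0 := by gcongr
  have k7 : Kb ≤ (ca + 1) / (θ₂ * δ) + cb / (θ₂ * δ) * (M + M1) := by
    rw [hKb]; apply le_of_eq; ring
  have k8 := mul_le_mul_of_nonneg_left k5 G.gθ.le
  have k9 : 0 ≤ Q * M1 := by positivity
  linarith

theorem core_main [FiniteDimensional ℝ E] (G : Geo D Ω g h θ₁ θ₂ r R) (hδ : 0 < δ) (hCw : 0 ≤ Cw) : 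
    ∃ C : ℝ, 0 < C ∧
    ∀ (U : Set E) (X : E → E) (w : ι → E → E), Sol D Ω r Cw δ U X w → 
      ∀ y ∈ closure D, ‖fderiv ℝ X y‖ ≤ C := by
  obtain ⟨C1, C2, hC1, hC2, hred⟩ := core_red (Cw := Cw) G hδ hCw
  obtain ⟨c0, c1, hc0, hc1, htan⟩ := core_tan (Cw := Cw) G hδ hCw
  have hp := G.gθ
  set B : ℝ := 1 + (c0 + c1 * (C1 + C2 + 1)) / θ₁ with hB
  have hB0 : 0 ≤ B := by positivity
  refine ⟨C1 * B + C2 + 1, by positivity, fun U X w S y hy => ?_⟩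
  have key : ∃ M1, 0 ≤ M1 ∧ M1 ≤ B ∧ ∀ y ∈ frontier D, ∀ τ, ⟪gradient h y, τ⟫ = 0 → 
      ⟪τ, fderiv ℝ X y τ⟫ ≤ M1 * ‖τ‖ ^ 2 := by
    set s : Set (E × E) := (frontier D ×ˢ Metric.sphere 0 1) ∩ {z | ⟪gradient h z.1, z.2⟫ = 0}
    have hfc : IsCompact (frontier D) := 
      G.cD.of_isClosed_subset isClosed_frontier frontier_subset_closure
    have hcont : Continuous fun z : E × E => ⟪gradient h z.1, z.2⟫ := 
      ((grad_contDiff G.hh).continuous.comp continuous_fst).inner continuous_snd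
    have hsc : IsCompact s := (hfc.prod (isCompact_sphere 0 1)).inter_right 
      (isClosed_eq hcont continuous_const)
    have hfcont : ContinuousOn (fun z : E × E => ⟪z.2, fderiv ℝ X z.1 z.2⟫) s := by
      refine continuousOn_snd.inner (ContinuousOn.clm_apply ?_ continuousOn_snd)
      exact S.sA.continuousOn.comp continuousOn_fst 
        fun z hz => S.hDU (frontier_subset_closure hz.1.1)
    have hunit : ∀ M1, (∀ z ∈ s, ⟪z.2, fderiv ℝ X z.1 z.2⟫ ≤ M1) → 
        ∀ y ∈ frontier D, ∀ τ, ⟪gradient h y, τ⟫ = 0 → ⟪τ, fderiv ℝ X y τ⟫ ≤ M1 * ‖τ‖ ^ 2 := by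
      intro M1 hM y hy a ha0
      by_cases ha : a = 0
      · simp [ha]
      have hn : 0 < ‖a‖ := norm_pos_iff.2 ha
      have := hM (y, ‖a‖⁻¹ • a) ⟨⟨hy, by 
        simp [norm_smul, hn.ne']⟩, by
        change ⟪gradient h y, ‖a‖⁻¹ • a⟫ = 0
        rw [inner_smul_right, ha0, mul_zero]⟩
      simp only [map_smul, inner_smul_left, inner_smul_right, conj_trivial] at this
      rw [← mul_assoc, ← sq, inv_pow, inv_mul_le_iff₀ (by positivity)] at this
      linarith
    by_cases hne : s.Nonempty
    · obtain ⟨⟨y0, τ0⟩, ⟨⟨hy0, hτ0⟩, hντ⟩, hmax⟩ := hsc.exists_isMaxOn hne hfcont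
      have hτ1 : ‖τ0‖ = 1 := by simpa using hτ0
      have hT := hunit ⟪τ0, fderiv ℝ X y0 τ0⟫ (fun z hz => hmax hz)
      have hM0 : 0 ≤ ⟪τ0, fderiv ℝ X y0 τ0⟫ := S.nonneg (frontier_subset_closure hy0) τ0
      refine ⟨⟪τ0, fderiv ℝ X y0 τ0⟫, hM0, ?_, hT⟩
      have := htan U X w S _ _ hM0 (by positivity) hT (hred U X w S _ hM0 hT) y0 hy0 τ0 hτ1 hντ rfl
      set M1 := ⟪τ0, fderiv ℝ X y0 τ0⟫
      by_contra hlt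
      push Not at hlt
      have hM1 : 1 ≤ M1 := by
        refine le_trans ?_ hlt.le
        rw [hB]
        have : 0 ≤ (c0 + c1 * (C1 + C2 + 1)) / θ₁ := by positivity
        linarith
      have h1 : θ₁ * M1 ^ 2 ≤ (c0 + c1 * (C1 + C2 + 1)) * M1 := by
        have h2 : c0 ≤ c0 * M1 := le_mul_of_one_le_right hc0 hM1
        have h3 : c1 * C2 ≤ c1 * C2 * M1 := le_mul_of_one_le_right (by positivity) hM1
        linarith
      have h4 : M1 * θ₁ ≤ c0 + c1 * (C1 + C2 + 1) := by
        have : 0 < M1 := by linarith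
        nlinarith
      have h5 := (le_div_iff₀ hp).2 h4
      linarith
    · rw [Set.not_nonempty_iff_eq_empty] at hne
      exact ⟨0, le_rfl, hB0, hunit 0 (by simp [hne])⟩
  obtain ⟨M1, h0, hM1, hT⟩ := key
  have hb := hred U X w S M1 h0 hT y hy
  refine (ContinuousLinearMap.opNorm_le_bound _ (M := C1 * M1 + C2) (by positivity) 
    (psd_norm (S.sym y (S.hDU hy)) (S.nonneg hy) (by positivity) hb)).trans ?_
  have : C1 * M1 ≤ C1 * B := by gcongr
  linarith

end core5

section core6
set_option linter.unusedSectionVars false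
set_option maxSynthPendingDepth 5
open Filter Topology Set
open scoped ContDiff

section gen
variable {E : Type*} [NormedAddCommGroup E] [InnerProductSpace ℝ E] [CompleteSpace E]

lemma grad_symm {f : E → ℝ} {U : Set E} (hU : IsOpen U) (hf : ContDiffOn ℝ ∞ f U) {y : E}
    (hy : y ∈ U) (a b : E) : 
    ⟪fderiv ℝ (gradient f) y a, b⟫ = ⟪a, fderiv ℝ (gradient f) y b⟫ := by
  rw [← fderiv2_eq_grad hU hf hy, symm2 hU hf hy, fderiv2_eq_grad hU hf hy, real_inner_comm]

lemma touch [FiniteDimensional ℝ E] {f : E → ℝ} {U : Set E} (hU : IsOpen U) (hf : ContDiffOn ℝ ∞ f U) {x0 : E} {ρ G k : ℝ}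
    (hρ : 0 < ρ) (hB : Metric.closedBall x0 ρ ⊆ U) 
    (hG : ∀ x ∈ Metric.closedBall x0 ρ, ‖gradient f x‖ ≤ G) (hk : G < k * ρ) : 
    ∃ z ∈ Metric.ball x0 ρ, ∀ ξ, ⟪ξ, fderiv ℝ (gradient f) z ξ⟫ ≤ k * ‖ξ‖ ^ 2 := by
  have hq : ContDiff ℝ ∞ (fun x : E => ‖x - x0‖ ^ 2) := (contDiff_id.sub contDiff_const).norm_sq ℝ
  have hs : ContDiffOn ℝ ∞ (fun x => f x + (-(k / 2)) * ‖x - x0‖ ^ 2) U := 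
    hf.add (contDiffOn_const.mul hq.contDiffOn)
  have hqd : ∀ z a : E, ∀ t : ℝ, HasDerivAt (fun t : ℝ => ‖z + t • a - x0‖ ^ 2) 
      (2 * ⟪z + t • a - x0, a⟫) t := fun z a t => 
    ((line_hasDerivAt z a t).sub_const x0).norm_sq
  obtain ⟨z, hz, hmax⟩ := (isCompact_closedBall x0 ρ).exists_isMaxOn ⟨x0, by simp [hρ.le]⟩ 
    (hs.continuousOn.mono hB)
  have hzU := hB hz
  have hzb : z ∈ Metric.ball x0 ρ := by
    by_contra hnb
    have hzn : ‖z - x0‖ = ρ := by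
      rw [Metric.mem_ball, not_lt, dist_eq_norm] at hnb
      rw [Metric.mem_closedBall, dist_eq_norm] at hz
      exact le_antisymm hz hnb
    have h1 := (line_deriv0 hU hf hzU (x0 - z)).fun_add ((hqd z (x0 - z) 0).const_mul (-(k / 2)))
    have h2 := pos_right h1 (by
      rw [fderiv_eq_grad]
      have e : z + (0:ℝ) • (x0 - z) - x0 = -(x0 - z) := by rw [zero_smul]; abel
      rw [e, inner_neg_left, real_inner_self_eq_norm_sq, norm_sub_rev, hzn]
      have := abs_real_inner_le_norm (gradient f z) (x0 - z)
      rw [norm_sub_rev x0 z, hzn] at this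
      have h3 := hG z hz
      have h4 := (abs_le.1 this).1
      nlinarith)
    obtain ⟨t, ht, ht0, ht1⟩ := (h2.and (Ioo_mem_nhdsGT (show (0:ℝ) < 1 by norm_num))).exists
    have hm : z + t • (x0 - z) ∈ Metric.closedBall x0 ρ := by
      rw [Metric.mem_closedBall, dist_eq_norm]
      have : z + t • (x0 - z) - x0 = (1 - t) • (z - x0) := by module
      rw [this, norm_smul, hzn, Real.norm_eq_abs, abs_of_pos (by linarith)]
      nlinarith
    have h5 := hmax hm
    simp only [zero_smul, add_zero] at ht
    change f (z + t • (x0 - z)) + (-(k / 2)) * ‖z + t • (x0 - z) - x0‖ ^ 2 ≤ 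
      f z + (-(k / 2)) * ‖z - x0‖ ^ 2 at h5
    linarith
  refine ⟨z, hzb, fun ξ => ?_⟩
  have hlm : IsLocalMax (fun x => f x + (-(k / 2)) * ‖x - x0‖ ^ 2) z := by
    filter_upwards [Metric.isOpen_ball.mem_nhds hzb] with x hx
    exact hmax (Metric.ball_subset_closedBall hx)
  have hsn : HasSnd (fun x => ‖x - x0‖ ^ 2) z ξ (2 * ‖ξ‖ ^ 2) := by
    refine ⟨_, Eventually.of_forall fun t => hqd z ξ t, ?_⟩
    have := (((line_hasDerivAt z ξ 0).sub_const x0).inner ℝ (hasDerivAt_const (0:ℝ) ξ)).const_mul 2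
    refine this.congr_deriv ?_
    simp
  have := ((hasSnd_of_smooth hU hf hzU ξ).add (hsn.const_mul (-(k / 2)))).nonpos_of_isLocalMax hlm
  rw [fderiv2_eq_grad hU hf hzU, real_inner_comm] at this
  linarith

end gen

variable {n : ℕ}

/-- `√(1-|p|²)` -/
def vv (p : EuclideanSpace ℝ (Fin n)) : ℝ := Real.sqrt (1 - ‖p‖ ^ 2)

/-- frame of the coefficient matrix -/
def rr : Option (Fin n) → EuclideanSpace ℝ (Fin n) → EuclideanSpace ℝ (Fin n)
  | none, p => ((Real.sqrt (vv p))⁻¹ * (vv p)⁻¹) • p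
  | some i, p => (Real.sqrt (vv p))⁻¹ • ev n i

lemma vv_pos {p : EuclideanSpace ℝ (Fin n)} (hp : ‖p‖ < 1) : 0 < vv p := by
  apply Real.sqrt_pos.2
  nlinarith [norm_nonneg p]

lemma vv_le (p : EuclideanSpace ℝ (Fin n)) : vv p ≤ 1 := by
  apply Real.sqrt_le_one.2
  nlinarith [norm_nonneg p]

lemma vv_smooth : ContDiffOn ℝ ∞ (vv (n := n)) (Metric.ball 0 1) := by
  refine ContDiffOn.sqrt (contDiff_const.sub (contDiff_id.norm_sq ℝ)).contDiffOn fun x hx => ?_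
  have : ‖x‖ < 1 := by simpa using hx
  have h2 : 0 < 1 - ‖x‖ ^ 2 := by nlinarith [norm_nonneg x]
  exact h2.ne'

lemma rr_smooth (i : Option (Fin n)) : ContDiffOn ℝ ∞ (rr i) (Metric.ball 0 1) := by
  have h1 : ContDiffOn ℝ ∞ (fun p => (Real.sqrt (vv (n := n) p))⁻¹) (Metric.ball 0 1) := by
    refine (vv_smooth.sqrt fun x hx => ?_).inv fun x hx => ?_
    · exact (vv_pos (by simpa using hx)).ne'
    · exact (Real.sqrt_pos.2 (vv_pos (by simpa using hx))).ne'
  have h2 : ContDiffOn ℝ ∞ (fun p => (vv (n := n) p)⁻¹) (Metric.ball 0 1) := 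
    vv_smooth.inv fun x hx => (vv_pos (by simpa using hx)).ne'
  cases i with
  | none => exact (h1.mul h2).smul contDiffOn_id
  | some i => exact h1.smul contDiffOn_const

lemma ev_norm (i : Fin n) : ‖ev n i‖ = 1 := by simp [ev]

lemma inner_ev (p : EuclideanSpace ℝ (Fin n)) (i : Fin n) : ⟪p, ev n i⟫ = p i := by
  rw [real_inner_comm, ev, EuclideanSpace.inner_single_left]; simp

lemma sum_ev (p : EuclideanSpace ℝ (Fin n)) : ∑ i, ⟪p, ev n i⟫ • ev n i = p := by
  simp only [inner_ev]
  ext j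
  simp [ev, Finset.sum_apply, Pi.single_apply]

lemma MOp_eq {u : EuclideanSpace ℝ (Fin n) → ℝ} {U : Set (EuclideanSpace ℝ (Fin n))} (hU : IsOpen U)
    (hu : ContDiffOn ℝ ∞ u U) {x : EuclideanSpace ℝ (Fin n)} (hx : x ∈ U) (h1 : ‖gradient u x‖ < 1) : 
    MOp n u x = ∑ i, ⟪rr i (gradient u x), fderiv ℝ (gradient u) x (rr i (gradient u x))⟫ := by
  have hv := vv_pos h1
  have hg := grad_smooth hU hu
  have hval : 0 < 1 - ‖gradient u x‖ ^ 2 := by nlinarith [norm_nonneg (gradient u x)]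
  have hgd : DifferentiableAt ℝ (gradient u) x := 
    (hg.contDiffAt (hU.mem_nhds hx)).differentiableAt (by simp)
  have key : ∀ i, fderiv ℝ (fun y => fderiv ℝ u y (ev n i) / Real.sqrt (1 - ‖gradient u y‖ ^ 2)) x 
      (ev n i) = (vv (gradient u x))⁻¹ * ⟪ev n i, fderiv ℝ (gradient u) x (ev n i)⟫ + 
      (vv (gradient u x))⁻¹ ^ 3 * (⟪gradient u x, ev n i⟫ * 
        ⟪gradient u x, fderiv ℝ (gradient u) x (ev n i)⟫) := by
    intro i
    simp_rw [fderiv_eq_grad]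
    have hd : DifferentiableAt ℝ 
      (fun y => ⟪gradient u y, ev n i⟫ / Real.sqrt (1 - ‖gradient u y‖ ^ 2)) x := by
      have hd2 : DifferentiableAt ℝ (fun y => Real.sqrt (1 - ‖gradient u y‖ ^ 2)) x := 
        ((hgd.norm_sq ℝ).const_sub 1).sqrt hval.ne'
      have hd1 : DifferentiableAt ℝ (fun y => ⟪gradient u y, ev n i⟫) x := 
        hgd.inner ℝ (differentiableAt_const (ev n i))
      have hd0 : (fun y => Real.sqrt (1 - ‖gradient u y‖ ^ 2)) x ≠ 0 := (Real.sqrt_pos.2 hval).ne'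
      simp_rw [div_eq_mul_inv]
      exact hd1.fun_mul (hd2.fun_inv hd0)
    rw [← fderiv_eq_grad]
    apply fderiv_along hd
    have l0 := line_deriv0 hU hg hx (ev n i)
    have l1 := l0.inner ℝ (hasDerivAt_const 0 (ev n i))
    have l2 := (l0.norm_sq.const_sub 1).sqrt (by simpa using hval.ne')
    have l3 := l1.fun_div l2 (by simpa using (Real.sqrt_pos.2 hval).ne')
    refine l3.congr_deriv ?_
    simp only [zero_smul, add_zero, inner_zero_right, zero_add]
    rw [real_inner_comm (ev n i)]
    change (_ * vv (gradient u x) - _ * (_ / (2 * vv (gradient u x)))) / vv (gradient u x) ^ 2 = _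
    set V := vv (gradient u x)
    field_simp
    ring
  unfold MOp
  rw [Fintype.sum_option]
  simp_rw [key]
  rw [Finset.sum_add_distrib, ← Finset.mul_sum, ← Finset.mul_sum]
  have e1 : ∑ i, ⟪gradient u x, ev n i⟫ * ⟪gradient u x, fderiv ℝ (gradient u) x (ev n i)⟫ = 
      ⟪gradient u x, fderiv ℝ (gradient u) x (gradient u x)⟫ := by
    conv_rhs => rw [show fderiv ℝ (gradient u) x (gradient u x) = fderiv ℝ (gradient u) x 
      (∑ i, ⟪gradient u x, ev n i⟫ • ev n i) by rw [sum_ev]]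
    rw [map_sum, inner_sum]
    refine Finset.sum_congr rfl fun i _ => ?_
    rw [map_smul, inner_smul_right]
  rw [e1]
  have hs : (Real.sqrt (vv (gradient u x)))⁻¹ * (Real.sqrt (vv (gradient u x)))⁻¹ = 
      (vv (gradient u x))⁻¹ := by
    rw [← mul_inv, Real.mul_self_sqrt hv.le]
  simp only [rr, map_smul, inner_smul_left, inner_smul_right, conj_trivial]
  rw [add_comm]
  congr 1
  · rw [← mul_assoc]
    congr 1
    rw [show ∀ a b : ℝ, (a * b) * (a * b) = (a * a) * b ^ 2 by intros; ring, hs]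
    ring
  · rw [Finset.mul_sum]
    refine Finset.sum_congr rfl fun i _ => ?_
    rw [← mul_assoc, hs]

/-- Hessian relations between `u` and its Legendre transform -/
lemma leg_data {Ω D : Set (EuclideanSpace ℝ (Fin n))} {u ut : EuclideanSpace ℝ (Fin n) → ℝ} {c : ℝ}
    (oΩ : IsOpen Ω) (oD : IsOpen D) (hs : IsSol n Ω D u c) (hl : IsLegendre n Ω D u ut) :
    (∀ y ∈ D, gradient ut y ∈ Ω) ∧ (∀ y ∈ closure D, gradient ut y ∈ closure Ω) ∧ 
    (∀ y ∈ closure D, gradient u (gradient ut y) = y) ∧ 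
    (∀ y ∈ D, ∀ a, fderiv ℝ (gradient ut) y (fderiv ℝ (gradient u) (gradient ut y) a) = a) ∧ 
    (∀ y ∈ closure D, ∀ a, fderiv ℝ (gradient u) (gradient ut y) (fderiv ℝ (gradient ut) y a) = a) := by
  obtain ⟨⟨Uu, hUu, hΩU, hu⟩, hn1, hpos, hbij, heq⟩ := hs
  obtain ⟨⟨Ut, hUt, hDU, hut⟩, -, hinv⟩ := hl
  have hX := grad_smooth hUt hut
  have hY := grad_smooth hUu hu
  have p1 : ∀ y ∈ D, gradient ut y ∈ Ω ∧ gradient u (gradient ut y) = y := by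
    intro y hy
    obtain ⟨x, hx, rfl⟩ := hbij.surjOn hy
    rw [hinv x hx]
    exact ⟨hx, rfl⟩
  have hXc : ContinuousOn (gradient ut) (closure D) := hX.continuousOn.mono hDU
  have p2 : ∀ y ∈ closure D, gradient ut y ∈ closure Ω := fun y hy => 
    closure_mono (image_subset_iff.2 fun z hz => (p1 z hz).1) (hXc.image_closure ⟨y, hy, rfl⟩)
  have hYc : ContinuousOn (fun y => gradient u (gradient ut y)) (closure D) := 
    (hY.continuousOn.mono hΩU).comp hXc p2
  have p3 : ∀ y ∈ closure D, gradient u (gradient ut y) = y := by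
    have : EqOn (fun y => gradient u (gradient ut y)) id (closure D) := 
      EqOn.of_subset_closure (s := D) (fun y hy => (p1 y hy).2) hYc continuousOn_id subset_closure 
        subset_rfl
    exact fun y hy => this hy
  have dX : ∀ y ∈ closure D, DifferentiableAt ℝ (gradient ut) y := fun y hy => 
    (hX.contDiffAt (hUt.mem_nhds (hDU hy))).differentiableAt (by simp)
  have dY : ∀ x ∈ closure Ω, DifferentiableAt ℝ (gradient u) x := fun y hy => 
    (hY.contDiffAt (hUu.mem_nhds (hΩU hy))).differentiableAt (by simp)
  refine ⟨fun y hy => (p1 y hy).1, p2, p3, ?_, ?_⟩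
  · intro y hy a
    have hx := (p1 y hy).1
    have e := (p1 y hy).2
    have h1 : HasFDerivAt (gradient ut) (fderiv ℝ (gradient ut) y) (gradient u (gradient ut y)) := by
      rw [e]; exact (dX y (subset_closure hy)).hasFDerivAt
    have h2 := h1.comp (gradient ut y) (dY _ (subset_closure hx)).hasFDerivAt
    have h3 : HasFDerivAt (gradient ut ∘ gradient u) (ContinuousLinearMap.id ℝ _) (gradient ut y) := by
      refine (hasFDerivAt_id _).congr_of_eventuallyEq ?_
      filter_upwards [oΩ.mem_nhds hx] with x hx
      exact hinv x hx
    exact DFunLike.congr_fun (h2.unique h3) a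
  · intro y hy a
    have hin : ∀ y ∈ D, fderiv ℝ (gradient u) (gradient ut y) (fderiv ℝ (gradient ut) y a) = a := by
      intro y hy
      have hx := (p1 y hy).1
      have h2 := (dY _ (subset_closure hx)).hasFDerivAt.comp y (dX y (subset_closure hy)).hasFDerivAt
      have h3 : HasFDerivAt (gradient u ∘ gradient ut) (ContinuousLinearMap.id ℝ _) y := by
        refine (hasFDerivAt_id _).congr_of_eventuallyEq ?_
        filter_upwards [oD.mem_nhds hy] with x hx
        exact (p1 x hx).2
      exact DFunLike.congr_fun (h2.unique h3) a
    have c1 : ContinuousOn (fun y => fderiv ℝ (gradient u) (gradient ut y)) (closure D) := 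
      ((sm_fderiv hUu hY).continuousOn.mono hΩU).comp hXc p2
    have c2 : ContinuousOn (fun y => fderiv ℝ (gradient ut) y a) (closure D) := 
      ((sm_fderiv hUt hX).continuousOn.mono hDU).clm_apply continuousOn_const
    exact EqOn.of_subset_closure (s := D) (f := fun y => fderiv ℝ (gradient u) (gradient ut y) 
      (fderiv ℝ (gradient ut) y a)) (g := fun _ => a) hin (c1.clm_apply c2) continuousOn_const 
      subset_closure subset_rfl hy

lemma rr_self {p : EuclideanSpace ℝ (Fin n)} (hp : ‖p‖ < 1) (i : Fin n) : 
    1 ≤ ‖rr (some i) p‖ := by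
  have := vv_pos hp
  simp only [rr]
  rw [norm_smul, ev_norm, mul_one, Real.norm_eq_abs, abs_of_nonneg (by positivity)]
  exact (one_le_inv₀ (Real.sqrt_pos.2 this)).2 (Real.sqrt_le_one.2 (vv_le p))

lemma rr_form {p : EuclideanSpace ℝ (Fin n)} (hp : ‖p‖ < 1) 
    (W : EuclideanSpace ℝ (Fin n) →L[ℝ] EuclideanSpace ℝ (Fin n)) (hW : ∀ a, 0 ≤ ⟪a, W a⟫) 
    (i : Fin n) : ⟪ev n i, W (ev n i)⟫ ≤ ⟪rr (some i) p, W (rr (some i) p)⟫ := by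
  have h0 := vv_pos hp
  simp only [rr, map_smul, inner_smul_left, inner_smul_right, conj_trivial]
  have h1 := (one_le_inv₀ (Real.sqrt_pos.2 h0)).2 (Real.sqrt_le_one.2 (vv_le p))
  have h2 := hW (ev n i)
  rw [← mul_assoc]
  exact le_mul_of_one_le_left h2 (one_le_mul_of_one_le_of_one_le h1 h1)

lemma norm_le_sum_ev (a : EuclideanSpace ℝ (Fin n)) : ‖a‖ ≤ ∑ i, |⟪a, ev n i⟫| := by
  conv_lhs => rw [← sum_ev a]
  refine (norm_sum_le _ _).trans (Finset.sum_le_sum fun i _ => ?_)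
  rw [norm_smul, ev_norm, mul_one, Real.norm_eq_abs]

theorem red_main {Ω D : Set (EuclideanSpace ℝ (Fin n))} {g h : EuclideanSpace ℝ (Fin n) → ℝ} 
    {θ₁ θ₂ : ℝ} (hn : 2 ≤ n) (G : Geo D Ω g h θ₁ θ₂ rr (Metric.ball 0 1)) 
    (hΩne : Ω.Nonempty) (hDne : D.Nonempty) :
    ∃ Cw δ : ℝ, 0 ≤ Cw ∧ 0 < δ ∧ ∀ u ut c, IsSol n Ω D u c → IsLegendre n Ω D u ut → 
      ∃ U w, Sol D Ω rr Cw δ U (gradient ut) w := by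
  obtain ⟨Cr, hCr, hr⟩ := G.rbound
  obtain ⟨x0, hx0⟩ := hΩne
  obtain ⟨y0, hy0⟩ := hDne
  obtain ⟨ρ, hρ, hρΩ⟩ := Metric.nhds_basis_closedBall.mem_iff.1 (G.oΩ.mem_nhds hx0)
  obtain ⟨ρ', hρ', hρD⟩ := Metric.nhds_basis_closedBall.mem_iff.1 (G.oD.mem_nhds hy0)
  obtain ⟨Bx, hBx, hBxb⟩ := cbound G.cΩ (F := fun x => x) continuousOn_id
  set N : ℝ := (Fintype.card (Option (Fin n)) : ℝ) with hN
  have hN0 : 0 ≤ N := by positivity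
  set k : ℝ := 2 / ρ with hk
  set k' : ℝ := (Bx + 1) / ρ' with hk'
  have hk0 : 0 < k := by positivity
  have hk0' : 0 < k' := by positivity
  set c2 : ℝ := N * (k * Cr ^ 2) with hc2
  have hc20 : 0 ≤ c2 := by positivity
  refine ⟨n * c2, (1 / k') ^ 2 / (Cr ^ 2 * N + 1), by positivity, by positivity, ?_⟩
  intro u ut c hs hl
  obtain ⟨p1, p2, p3, p4, p5⟩ := leg_data G.oΩ G.oD hs hl
  obtain ⟨⟨Uu, hUu, hΩU, hu⟩, hn1, hpos, hbij, heq⟩ := hs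
  obtain ⟨⟨Ut, hUt, hDU, hut⟩, -, hinv⟩ := hl
  have hX := grad_smooth hUt hut
  have hY := grad_smooth hUu hu
  set w : Option (Fin n) → EuclideanSpace ℝ (Fin n) → EuclideanSpace ℝ (Fin n) := 
    fun i y => fderiv ℝ (gradient u) (gradient ut y) (rr i y) with hw
  have hball : ∀ y ∈ D, ‖y‖ < 1 := fun y hy => by simpa using G.DR hy
  have hWsym : ∀ x ∈ closure Ω, ∀ a b, ⟪fderiv ℝ (gradient u) x a, b⟫ = 
      ⟪a, fderiv ℝ (gradient u) x b⟫ := fun x hx a b => grad_symm hUu hu (hΩU hx) a b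
  have hWpos : ∀ x ∈ closure Ω, ∀ a, 0 ≤ ⟪a, fderiv ℝ (gradient u) x a⟫ := fun x hx a => by
    by_cases ha : a = 0
    · simp [ha]
    · exact (hpos x hx a ha).le
  have heqn : ∀ y ∈ D, ∑ i, ⟪rr i y, w i y⟫ = c := by
    intro y hy
    have hx := p1 y hy
    have := MOp_eq hUu hu (hΩU (subset_closure hx)) (hn1 _ (subset_closure hx))
    rw [heq _ hx, p3 y (subset_closure hy)] at this
    exact this.symm
  have hcu : c ≤ c2 := by
    obtain ⟨z, hz, hzb⟩ := touch hUu hu hρ (hρΩ.trans (subset_closure.trans hΩU)) (G := 1) (k := k) 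
      (fun x hx => (hn1 x (subset_closure (hρΩ hx))).le) (by rw [hk]; field_simp; norm_num)
    have hzΩ := hρΩ (Metric.ball_subset_closedBall hz)
    have hyD : gradient u z ∈ D := hbij.mapsTo hzΩ
    rw [← heqn _ hyD, hc2]
    have e : N * (k * Cr ^ 2) = ∑ _i : Option (Fin n), k * Cr ^ 2 := by
      rw [Finset.sum_const, Finset.card_univ, nsmul_eq_mul]
    rw [e]
    refine Finset.sum_le_sum fun i _ => ?_
    simp only [hw]
    rw [hinv z hzΩ]
    refine (hzb _).trans ?_
    have := (hr i _ (subset_closure hyD)).1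
    gcongr
  have hAsym : ∀ y ∈ Ut, ∀ a b, ⟪fderiv ℝ (gradient ut) y a, b⟫ = 
      ⟪a, fderiv ℝ (gradient ut) y b⟫ := fun y hy a b => grad_symm hUt hut hy a b
  have hApos : ∀ y ∈ closure D, ∀ a, a ≠ 0 → 0 < ⟪a, fderiv ℝ (gradient ut) y a⟫ := by
    intro y hy a ha
    have h1 := p5 y hy a
    have h2 : fderiv ℝ (gradient ut) y a ≠ 0 := by
      intro h0; rw [h0, map_zero] at h1; exact ha h1.symm
    have := hpos _ (p2 y hy) _ h2
    rwa [h1, real_inner_comm] at this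
  have hApos' : ∀ y ∈ closure D, ∀ a, 0 ≤ ⟪a, fderiv ℝ (gradient ut) y a⟫ := fun x hx a => by
    by_cases ha : a = 0
    · simp [ha]
    · exact (hApos x hx a ha).le
  have hcl : 1 / k' ≤ c := by
    obtain ⟨z, hz, hzb⟩ := touch hUt hut hρ' (hρD.trans (subset_closure.trans hDU)) (G := Bx) (k := k') 
      (fun x hx => hBxb _ (subset_closure (p1 x (hρD hx)))) (by 
        rw [hk', div_mul_cancel₀ _ hρ'.ne']; linarith)
    have hzD := hρD (Metric.ball_subset_closedBall hz)
    have hzU := hDU (subset_closure hzD)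
    rw [← heqn z hzD]
    have hlow : ∀ ζ, (1 / k') * ‖ζ‖ ^ 2 ≤ ⟪ζ, fderiv ℝ (gradient u) (gradient ut z) ζ⟫ := by
      intro ζ
      have h1 := hApos' z (subset_closure hzD) 
        (fderiv ℝ (gradient u) (gradient ut z) ζ - (1 / k') • ζ)
      have h2 := hzb ζ
      rw [map_sub, p4 z hzD, map_smul, inner_sub_left, inner_sub_right, inner_sub_right, 
        inner_smul_left, inner_smul_left, inner_smul_right, inner_smul_right, ← hAsym z hzU, 
        p4 z hzD, real_inner_self_eq_norm_sq, real_inner_comm ζ] at h1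
      simp only [conj_trivial] at h1
      have h3 : (1 / k') * ((1 / k') * ⟪ζ, fderiv ℝ (gradient ut) z ζ⟫) ≤ 
        (1 / k') * ((1 / k') * (k' * ‖ζ‖ ^ 2)) := by gcongr
      have h4 : (1 / k') * ((1 / k') * (k' * ‖ζ‖ ^ 2)) = (1 / k') * ‖ζ‖ ^ 2 := by field_simp
      linarith
    have hi := Finset.single_le_sum (f := fun i => ⟪rr i z, w i z⟫) (s := Finset.univ) 
      (fun i _ => hWpos _ (p2 z (subset_closure hzD)) (rr i z)) 
      (Finset.mem_univ (some (⟨0, by omega⟩ : Fin n)))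
    refine le_trans ?_ hi
    refine le_trans ?_ (hlow _)
    have := rr_self (hball z hzD) (⟨0, by omega⟩ : Fin n)
    have h5 : 1 ≤ ‖rr (some (⟨0, by omega⟩ : Fin n)) z‖ ^ 2 := one_le_pow₀ this
    exact le_mul_of_one_le_right (by positivity) h5
  refine ⟨Ut, w, ⟨hUt, hDU, hX, hAsym, hApos, ?_, ?_, ⟨c, heqn⟩, ?_, ?_, p1, ?_⟩⟩
  · intro i
    have h1 : ContDiffOn ℝ ∞ (fun y => fderiv ℝ (gradient u) (gradient ut y)) D := 
      (sm_fderiv hUu hY).comp (hX.mono (subset_closure.trans hDU)) 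
        (fun y hy => hΩU (subset_closure (p1 y hy)))
    exact h1.clm_apply ((rr_smooth i).mono G.DR)
  · intro y hy i
    exact p4 y hy _
  · intro y hy i
    have hxc := p2 y (subset_closure hy)
    have hri : ∀ i, ⟪rr i y, w i y⟫ ≤ c2 := fun i => by
      refine le_trans ?_ hcu
      rw [← heqn y hy]
      exact Finset.single_le_sum (f := fun i => ⟪rr i y, w i y⟫) 
        (fun i _ => hWpos _ hxc (rr i y)) (Finset.mem_univ i)
    refine (norm_le_sum_ev _).trans ?_
    have e : (n:ℝ) * c2 = ∑ _i : Fin n, c2 := by simp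
    rw [e]
    refine Finset.sum_le_sum fun j _ => ?_
    have b1 := hri i
    have b2 := (rr_form (hball y hy) _ (hWpos _ hxc) j).trans (hri (some j))
    have b3 := hWpos _ hxc (rr i y - ev n j)
    have b4 := hWpos _ hxc (rr i y + ev n j)
    have b5 := hWsym _ hxc (rr i y) (ev n j)
    simp only [map_sub, map_add, inner_sub_left, inner_sub_right, inner_add_left, 
      inner_add_right] at b3 b4
    rw [← b5, real_inner_comm (fderiv ℝ (gradient u) (gradient ut y) (rr i y)) (ev n j)] at b3 b4
    rw [abs_le]
    simp only [hw] at b1 ⊢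
    constructor <;> linarith
  · intro y hy
    rw [div_le_iff₀ (by positivity)]
    have h1 : c ≤ Cr * ∑ i, ‖w i y‖ := by
      rw [← heqn y hy, Finset.mul_sum]
      refine Finset.sum_le_sum fun i _ => (real_inner_le_norm _ _).trans ?_
      have := (hr i y (subset_closure hy)).1
      gcongr
    have h2 := sq_sum_le_card_mul_sum_sq (s := Finset.univ) (f := fun i => ‖w i y‖)
    rw [Finset.card_univ, ← hN] at h2
    have h3 : (1 / k') ^ 2 ≤ (Cr * ∑ i, ‖w i y‖) ^ 2 := by
      have := hcl.trans h1
      gcongr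
    have h4 : 0 ≤ ∑ i, ‖w i y‖ ^ 2 := by positivity
    rw [mul_pow] at h3
    have h5 := mul_le_mul_of_nonneg_left h2 (sq_nonneg Cr)
    linarith
  · intro y hy
    have hyc := frontier_subset_closure hy
    refine mem_frontier_of G.oΩ (p2 y hyc) fun hx => ?_
    have := hbij.mapsTo hx
    rw [p3 y hyc] at this
    rw [G.oD.frontier_eq] at hy
    exact hy.2 this

end core6

/-- Lemma 4.7.  Global bound `‖D²ũ‖ ≤ C₃₆` on the closure of `Ω̃` for the
Legendre transform of any strictly convex solution. -/
theorem statement15 (n : ℕ) (hn : 2 ≤ n) (Ω Ω' : Set (EuclideanSpace ℝ (Fin n)))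
    (g h : EuclideanSpace ℝ (Fin n) → ℝ) (θ₁ θ₂ : ℝ)
    (hΩb : Bornology.IsBounded Ω) (hΩ'b : Bornology.IsBounded Ω')
    (hΩ : IsUnifConvexDefFn n Ω g θ₁) (hΩ' : IsUnifConvexDefFn n Ω' h θ₂)
    (hsub : closure Ω' ⊆ Metric.ball (0 : EuclideanSpace ℝ (Fin n)) 1) :
    ∃ C₃₆ : ℝ, 0 < C₃₆ ∧
      ∀ (u ut : EuclideanSpace ℝ (Fin n) → ℝ) (c : ℝ),
        IsSol n Ω Ω' u c → IsLegendre n Ω Ω' u ut →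
        ∀ y ∈ closure Ω', ‖fderiv ℝ (gradient ut) y‖ ≤ C₃₆ := by
  by_cases hne : Ω'.Nonempty ∧ Ω.Nonempty
  · have hG : Geo Ω' Ω g h θ₁ θ₂ rr (Metric.ball 0 1) := 
      ⟨hΩ.1, hΩ.2.1, hΩ.2.2.1, hΩ.2.2.2.1, hΩ.2.2.2.2, hΩ'.1, hΩ'.2.1, hΩ'.2.2.1, hΩ'.2.2.2.1, 
        hΩ'.2.2.2.2, hΩ'b.isCompact_closure, hΩb.isCompact_closure, Metric.isOpen_ball, hsub, 
        rr_smooth⟩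
    obtain ⟨Cw, δ, hCw, hδ, hred⟩ := red_main hn hG hne.2 hne.1
    obtain ⟨C, hC, hm⟩ := core_main (Cw := Cw) hG hδ hCw
    refine ⟨C, hC, fun u ut c hs hl y hy => ?_⟩
    obtain ⟨U, w, S⟩ := hred u ut c hs hl
    exact hm U _ w S y hy
  · refine ⟨1, one_pos, fun u ut c hs hl y hy => ?_⟩
    exfalso
    apply hne
    have h1 : Ω'.Nonempty := closure_nonempty_iff.1 ⟨y, hy⟩
    refine ⟨h1, ?_⟩
    obtain ⟨z, hz⟩ := h1
    obtain ⟨x, hx, -⟩ := hs.2.2.2.1.surjOn hz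
    exact ⟨x, hx⟩
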